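/- arXiv:1210.8413 — 5 statements merged into one kernel-verified Lean document; each statement's English description precedes it below -/
import Mathlib

section
/- Let K be a field of characteristic 0 and let p, q ∈ Kˣ, neither of which is a root of unity. Let θ : A_1^p(K) → A_1^q(K) be a K-algebra isomorphism, let X, Y denote the images in A_1^p(K) of the two free generators, and let x, y denote those in A_1^q(K). Then there exists λ ∈ Kˣ such that θ(XY − YX) = λ·(xy − yx). -/
/-- The defining relation of the quantum Weyl algebra `A_1^q(K)`:
`x * y = q • (y * x) + 1`, where `x, y` are the two free generators. -/
inductive WeylRel (K : Type*) [Field K] (q : K) :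
    FreeAlgebra K (Fin 2) → FreeAlgebra K (Fin 2) → Prop
  | rel : WeylRel K q (FreeAlgebra.ι K 0 * FreeAlgebra.ι K 1)
      (q • (FreeAlgebra.ι K 1 * FreeAlgebra.ι K 0) + 1)

/-- The quantum Weyl algebra `A_1^q(K)`. -/
abbrev QuantumWeyl (K : Type*) [Field K] (q : K) := RingQuot (WeylRel K q)

/-- The images of the two free generators in `A_1^q(K)`; `wgen K q 0` is `x`
and `wgen K q 1` is `y`. -/
noncomputable def wgen (K : Type*) [Field K] (q : K) (i : Fin 2) : QuantumWeyl K q :=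
  RingQuot.mkAlgHom K (WeylRel K q) (FreeAlgebra.ι K i)


/-!
Write `z = ⁅x, y⁆`. It `q`-commutes with `x` and `y`, hence is normal, and `x`, `y` commute modulo
it, so it divides every commutator. Consequently the image of the `z` of `A_1^p` under `θ` and the
`z` of `A_1^q` divide each other, and it remains to see that `A_1^q` has no zero divisors and no
units but the nonzero scalars. For this, let it act on `K[Y][X]` as an Ore extension acts on its
normal forms by left multiplication: the element `∑ fₙ(y) xⁿ` then raises the `X`-degree by exactly
its own `X`-degree. Writing the `q`-derivative with the sums `1 + q + ⋯ + q ^ (n - 1)` rather than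
the quotients `(q ^ n - 1) / (q - 1)` makes the argument uniform in `q ≠ 0`, including `q = 1`.
-/

namespace QuantumWeyl

open Polynomial

section Divisibility

variable {R A : Type*} [CommRing R] [Ring A] [Algebra R A]

theorem dvd_mul_self_of_adjoin_eq_top {s : Set A} (hs : Algebra.adjoin R s = ⊤) {z : A}
    (hz : ∀ a ∈ s, z ∣ a * z) (a : A) : z ∣ a * z := by
  have ha : a ∈ Algebra.adjoin R s := hs ▸ Algebra.mem_top
  induction ha using Algebra.adjoin_induction with
  | mem a ha => exact hz a ha
  | algebraMap r => exact ⟨_, Algebra.commutes r z⟩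
  | add a b _ _ iha ihb => exact add_mul a b z ▸ dvd_add iha ihb
  | mul a b _ _ iha ihb =>
    obtain ⟨c, hc⟩ := ihb
    rw [mul_assoc, hc, ← mul_assoc]
    exact iha.mul_right c

theorem dvd_lie_comm {z a b : A} : z ∣ ⁅a, b⁆ ↔ z ∣ ⁅b, a⁆ := by
  simp only [Ring.lie_def, dvd_sub_comm]

theorem dvd_lie_of_mem_adjoin {s : Set A} {z b : A} (hz : ∀ a, z ∣ a * z)
    (hb : ∀ a ∈ s, z ∣ ⁅a, b⁆) {a : A} (ha : a ∈ Algebra.adjoin R s) : z ∣ ⁅a, b⁆ := by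
  induction ha using Algebra.adjoin_induction with
  | mem a ha => exact hb a ha
  | algebraMap r => simp [Ring.lie_def, Algebra.commutes r b]
  | add a a' _ _ ih ih' =>
    have additive : ⁅a + a', b⁆ = ⁅a, b⁆ + ⁅a', b⁆ := by
      simp only [Ring.lie_def]; noncomm_ring
    exact additive ▸ dvd_add ih ih'
  | mul a a' _ _ ih ih' =>
    have leibniz : ⁅a * a', b⁆ = a * ⁅a', b⁆ + ⁅a, b⁆ * a' := by
      simp only [Ring.lie_def]; noncomm_ring
    obtain ⟨c, hc⟩ := ih'
    rw [leibniz, hc, ← mul_assoc]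
    exact dvd_add ((hz a).mul_right c) (ih.mul_right a')

theorem dvd_lie_of_adjoin_eq_top {s : Set A} (hs : Algebra.adjoin R s = ⊤) {z : A}
    (hz : ∀ a ∈ s, z ∣ a * z) (hlie : ∀ a ∈ s, ∀ b ∈ s, z ∣ ⁅a, b⁆) (a b : A) : z ∣ ⁅a, b⁆ := by
  have hz' := dvd_mul_self_of_adjoin_eq_top hs hz
  have hmem (c : A) : c ∈ Algebra.adjoin R s := hs ▸ Algebra.mem_top
  refine dvd_lie_of_mem_adjoin hz' (fun a ha ↦ dvd_lie_comm.1 ?_) (hmem a)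
  exact dvd_lie_of_mem_adjoin hz' (fun b hb ↦ hlie b hb a ha) (hmem b)

variable {q : R} {x y : A}

theorem lie_eq_of_qCommute (h : x * y = q • (y * x) + 1) : ⁅x, y⁆ = (q - 1) • (y * x) + 1 := by
  rw [Ring.lie_def, h]; module

theorem mul_lie_of_qCommute (h : x * y = q • (y * x) + 1) : x * ⁅x, y⁆ = q • (⁅x, y⁆ * x) := by
  rw [lie_eq_of_qCommute h, mul_add, mul_smul_comm, ← mul_assoc, h]
  simp only [add_mul, smul_mul_assoc, one_mul, mul_one]
  module

theorem lie_mul_of_qCommute (h : x * y = q • (y * x) + 1) : ⁅x, y⁆ * y = q • (y * ⁅x, y⁆) := by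
  rw [lie_eq_of_qCommute h, add_mul, smul_mul_assoc, mul_assoc, h]
  simp only [mul_add, mul_smul_comm, one_mul, mul_one]
  module

theorem lie_dvd_lie_of_qCommute {q : Rˣ} (h : x * y = (q : R) • (y * x) + 1)
    (hxy : Algebra.adjoin R {x, y} = ⊤) (a b : A) : ⁅x, y⁆ ∣ ⁅a, b⁆ := by
  refine dvd_lie_of_adjoin_eq_top hxy ?_ ?_ a b
  · rintro a (ha | ha) <;> rw [ha]
    · exact ⟨(q : R) • x, by rw [mul_lie_of_qCommute h, mul_smul_comm]⟩
    · refine ⟨(↑q⁻¹ : R) • y, ?_⟩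
      rw [mul_smul_comm, lie_mul_of_qCommute h, smul_smul, Units.inv_mul, one_smul]
  · rintro _ (rfl | rfl) _ (rfl | rfl)
    · simp [Ring.lie_def]
    · exact dvd_rfl
    · exact dvd_lie_comm.1 dvd_rfl
    · simp [Ring.lie_def]

end Divisibility

section QCalculus

variable {R : Type*} [CommSemiring R]

/-- The dilation `f(X) ↦ f(q X)`. -/
noncomputable def dilation (q : R) : R[X] →ₐ[R] R[X] := aeval (C q * X)

theorem dilation_X_mul (q : R) (f : R[X]) : dilation q (X * f) = C q * X * dilation q f := by
  simp [dilation]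

theorem dilation_injective {S : Type*} [CommRing S] {q : S} (hq : q ∈ nonZeroDivisors S) :
    Function.Injective (dilation q) :=
  (injective_iff_map_eq_zero _).2 fun _ hf ↦
    (comp_C_mul_X_eq_zero_iff hq).1 hf

/-- Jackson's `q`-derivative, `X ^ n ↦ (1 + q + ⋯ + q ^ (n - 1)) X ^ (n - 1)`. -/
noncomputable def qDerivative (q : R) : R[X] →ₗ[R] R[X] :=
  lsum fun n ↦ (∑ i ∈ Finset.range n, q ^ i) • monomial (n - 1)

theorem qDerivative_monomial (q : R) (n : ℕ) (a : R) :
    qDerivative q (monomial n a) = monomial (n - 1) ((∑ i ∈ Finset.range n, q ^ i) * a) := by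
  simp [qDerivative, lsum, smul_monomial]

theorem qDerivative_X_mul (q : R) (f : R[X]) :
    qDerivative q (X * f) = C q * X * qDerivative q f + f := by
  induction f using Polynomial.induction_on' with
  | add f g hf hg => simp only [mul_add, map_add, hf, hg]; ring
  | monomial n a =>
    have hX : C q * X * qDerivative q (monomial n a)
        = monomial n (q * (∑ i ∈ Finset.range n, q ^ i) * a) := by
      cases n with
      | zero => rw [qDerivative_monomial]; simp
      | succ n => simp [qDerivative_monomial, mul_assoc, X_mul_monomial, C_mul_monomial]
    rw [X_mul_monomial, qDerivative_monomial, hX, ← map_add, geom_sum_succ]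
    simp [add_mul]

end QCalculus

section Ore

variable {R A : Type*} [CommSemiring R] [Semiring A] [Algebra R A]

/-- Left multiplication by `X` in the Ore extension `A[X; σ, δ]`, where `X * a = σ a * X + δ a`,
on normal forms `∑ aₙ Xⁿ`, which are stored as elements of `A[X]`. -/
noncomputable def oreMulX (σ δ : A →ₗ[R] A) : A[X] →ₗ[R] A[X] :=
  lsum fun n ↦ (monomial (n + 1)).restrictScalars R ∘ₗ σ + (monomial n).restrictScalars R ∘ₗ δ

variable (σ δ : A →ₗ[R] A)

theorem oreMulX_monomial (n : ℕ) (a : A) :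
    oreMulX σ δ (monomial n a) = monomial (n + 1) (σ a) + monomial n (δ a) := by
  simp [oreMulX, lsum]

theorem coeff_oreMulX_succ (u : A[X]) (n : ℕ) :
    (oreMulX σ δ u).coeff (n + 1) = σ (u.coeff n) + δ (u.coeff (n + 1)) := by
  induction u using Polynomial.induction_on' with
  | add u v hu hv => simp only [map_add, coeff_add, hu, hv]; abel
  | monomial m a =>
    simp only [oreMulX_monomial, coeff_add, coeff_monomial, add_left_inj, apply_ite σ, apply_ite δ,
      map_zero]

theorem oreMulX_C_mul {a s t : A} (hσ : ∀ b, σ (a * b) = s * σ b)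
    (hδ : ∀ b, δ (a * b) = s * δ b + t * b) (u : A[X]) :
    oreMulX σ δ (C a * u) = C s * oreMulX σ δ u + C t * u := by
  induction u using Polynomial.induction_on' with
  | add u v hu hv => simp only [mul_add, map_add, hu, hv]; abel
  | monomial n b =>
    simp only [C_mul_monomial, oreMulX_monomial, hσ, hδ, map_add, mul_add, add_assoc]

variable {σ}

theorem degree_oreMulX (hσ : Function.Injective σ) (u : A[X]) :
    (oreMulX σ δ u).degree = u.degree + 1 := by
  obtain rfl | hu := eq_or_ne u 0
  · simp
  rw [degree_eq_natDegree hu, ← Nat.cast_succ]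
  refine degree_eq_of_le_of_coeff_ne_zero ((degree_le_iff_coeff_zero _ _).2 fun k hk ↦ ?_) ?_
  · obtain ⟨k, rfl⟩ := Nat.exists_eq_add_one.2 (Nat.zero_lt_of_lt (Nat.cast_lt.1 hk))
    have hk' : u.natDegree < k := Nat.succ_lt_succ_iff.1 (Nat.cast_lt.1 hk)
    rw [coeff_oreMulX_succ, coeff_eq_zero_of_natDegree_lt hk',
      coeff_eq_zero_of_natDegree_lt (hk'.trans k.lt_succ_self), map_zero, map_zero, add_zero]
  · rw [coeff_oreMulX_succ, coeff_eq_zero_of_natDegree_lt u.natDegree.lt_succ_self, map_zero,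
      add_zero]
    exact (map_ne_zero_iff σ hσ).2 (leadingCoeff_ne_zero.2 hu)

end Ore

theorem degree_sum_C_mul_iterate {A : Type*} [Semiring A] [NoZeroDivisors A] {T : A[X] → A[X]}
    (hT : ∀ u, (T u).degree = u.degree + 1) (v u : A[X]) :
    (v.sum fun n a ↦ C a * T^[n] u).degree = v.degree + u.degree := by
  have hiter (n : ℕ) : (T^[n] u).degree = n + u.degree := by
    induction n with
    | zero => simp
    | succ n ih => rw [Function.iterate_succ_apply', hT, ih, Nat.cast_succ, add_right_comm]
  have hterm : ∀ n ∈ v.support, (C (v.coeff n) * T^[n] u).degree = n + u.degree := fun n hn ↦ by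
    rw [degree_mul, degree_C (mem_support_iff.1 hn), zero_add, hiter]
  obtain rfl | hu := eq_or_ne u 0
  · have hzero : ∀ n ∈ v.support, C (v.coeff n) * T^[n] 0 = 0 := fun n hn ↦ by
      simpa using hterm n hn
    rw [sum_def, Finset.sum_eq_zero hzero, degree_zero, WithBot.add_bot]
  rw [sum_def, degree_sum_eq_of_disjoint, Finset.sup_congr rfl hterm, degree,
    Finset.max_eq_sup_withBot]
  · exact (Finset.apply_sup_eq_sup_comp_of_linearOrder (· + u.degree)
      (fun _ _ h ↦ add_le_add_left h _) (WithBot.bot_add _)).symm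
  · rintro m ⟨hm, -⟩ n ⟨hn, -⟩ hmn heq
    have hadd : (m : WithBot ℕ) + u.degree = n + u.degree :=
      (hterm m hm).symm.trans (heq.trans (hterm n hn))
    exact hmn (Nat.cast_injective ((WithBot.add_right_inj (degree_ne_bot.2 hu)).1 hadd))

section NormalForm

variable {R A : Type*} [CommSemiring R] [Semiring A] [Algebra R A]

/-- The evaluation `∑ fₙ(Y) Xⁿ ↦ ∑ fₙ(y) xⁿ` of normally ordered polynomials, the coefficients
in `y` standing to the left of the powers of `x`. -/
noncomputable def normalEval (x y : A) : R[X][X] →+ A :=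
  eval₂AddMonoidHom (aeval y : R[X] →ₐ[R] A).toRingHom x

variable {q : R} {x y : A}

theorem normalEval_monomial (n : ℕ) (f : R[X]) :
    normalEval x y (monomial n f) = aeval y f * x ^ n := eval₂_monomial _ _

theorem normalEval_C (f : R[X]) : normalEval x y (C f) = aeval y f := eval₂_C _ _

theorem normalEval_C_mul (f : R[X]) (v : R[X][X]) :
    normalEval x y (C f * v) = aeval y f * normalEval x y v := by
  induction v using Polynomial.induction_on' with
  | add v w hv hw => rw [mul_add, map_add, hv, hw, map_add, mul_add]
  | monomial n g =>
    rw [C_mul_monomial, normalEval_monomial, map_mul, mul_assoc, normalEval_monomial]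

theorem mul_aeval_of_qCommute (h : x * y = q • (y * x) + 1) (f : R[X]) :
    x * aeval y f = aeval y (dilation q f) * x + aeval y (qDerivative q f) := by
  induction f using Polynomial.induction_on with
  | C a =>
    simp [dilation, Algebra.commutes, ← monomial_zero_left, qDerivative_monomial]
  | add f g hf hg => simp only [map_add, mul_add, add_mul, hf, hg]; abel
  | monomial n a hf =>
    have hX : C a * X ^ (n + 1) = X * (C a * X ^ n) := by ring
    rw [hX]
    generalize C a * X ^ n = g at hf ⊢
    calc x * aeval y (X * g) = q • (y * (x * aeval y g)) + aeval y g := by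
          rw [map_mul, aeval_X, ← mul_assoc, h, add_mul, smul_mul_assoc, mul_assoc, one_mul]
      _ = aeval y (C q * X * dilation q g) * x + aeval y (C q * X * qDerivative q g + g) := by
          simp only [hf, map_add, map_mul, aeval_C, aeval_X, mul_add, Algebra.smul_def, mul_assoc,
            add_assoc]
      _ = _ := by rw [dilation_X_mul, qDerivative_X_mul]

theorem mul_normalEval_of_qCommute (h : x * y = q • (y * x) + 1) (v : R[X][X]) :
    x * normalEval x y v =
      normalEval x y (oreMulX (dilation q).toLinearMap (qDerivative q) v) := by
  induction v using Polynomial.induction_on' with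
  | add v w hv hw => simp only [map_add, mul_add, hv, hw]
  | monomial n f =>
    simp only [oreMulX_monomial, map_add, normalEval_monomial, AlgHom.toLinearMap_apply]
    rw [← mul_assoc, mul_aeval_of_qCommute h, add_mul, mul_assoc, ← pow_succ']

end NormalForm

variable {K : Type*} [Field K]

theorem wgen_mul_wgen (q : K) :
    wgen K q 0 * wgen K q 1 = q • (wgen K q 1 * wgen K q 0) + 1 := by
  simpa [wgen] using RingQuot.mkAlgHom_rel K (WeylRel.rel (K := K) (q := q))

theorem adjoin_wgen (q : K) : Algebra.adjoin K {wgen K q 0, wgen K q 1} = ⊤ := by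
  have hrange : {wgen K q 0, wgen K q 1} =
      RingQuot.mkAlgHom K (WeylRel K q) '' Set.range (FreeAlgebra.ι K) := by
    ext a
    simp [← Set.range_comp, Fin.exists_fin_two, wgen, eq_comm]
  rw [hrange, ← AlgHom.map_adjoin, FreeAlgebra.adjoin_range_ι, Algebra.map_top,
    AlgHom.range_eq_top]
  exact RingQuot.mkAlgHom_surjective K _

/-- The representation of `A_1^q(K)` on `K[Y][X]` modelled on left multiplication in the Ore
extension of `K[Y]` by the dilation and the `q`-derivative. -/
noncomputable def oreAction (q : K) : QuantumWeyl K q →ₐ[K] Module.End K K[X][X] :=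
  RingQuot.liftAlgHom K ⟨FreeAlgebra.lift K
    ![oreMulX (dilation q).toLinearMap (qDerivative q), Algebra.lmul K K[X][X] (C X)], by
      rintro _ _ ⟨⟩
      ext1 v
      have hX := oreMulX_C_mul (dilation q).toLinearMap (qDerivative q) (t := 1)
        (dilation_X_mul q) (fun f ↦ by rw [qDerivative_X_mul, one_mul]) v
      simpa [mul_assoc, Algebra.smul_def, Polynomial.algebraMap_apply] using hX⟩

theorem oreAction_x (q : K) :
    oreAction q (wgen K q 0) = oreMulX (dilation q).toLinearMap (qDerivative q) := by
  simp [oreAction, wgen]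

theorem oreAction_y (q : K) : oreAction q (wgen K q 1) = Algebra.lmul K K[X][X] (C X) := by
  simp [oreAction, wgen]

theorem oreAction_aeval_y (q : K) (f : K[X]) :
    oreAction q (aeval (wgen K q 1) f) = Algebra.lmul K K[X][X] (C f) := by
  have hC : aeval (C X : K[X][X]) f = C f := by
    simpa using aeval_algHom_apply (CAlgHom : K[X] →ₐ[K] K[X][X]) X f
  rw [← aeval_algHom_apply, oreAction_y, aeval_algHom_apply, hC]

theorem mul_normalEval (q : K) (a : QuantumWeyl K q) (v : K[X][X]) :
    a * normalEval (wgen K q 0) (wgen K q 1) v =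
      normalEval (wgen K q 0) (wgen K q 1) (oreAction q a v) := by
  have ha : a ∈ Algebra.adjoin K {wgen K q 0, wgen K q 1} := adjoin_wgen q ▸ Algebra.mem_top
  induction ha using Algebra.adjoin_induction generalizing v with
  | mem a ha =>
    obtain rfl | rfl := ha
    · rw [oreAction_x, mul_normalEval_of_qCommute (wgen_mul_wgen q)]
    · rw [oreAction_y, Algebra.coe_lmul_eq_mul, LinearMap.mul_apply', normalEval_C_mul, aeval_X]
  | algebraMap c =>
    have hc := normalEval_C_mul (x := wgen K q 0) (y := wgen K q 1) (C c) v
    rw [aeval_C] at hc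
    rw [← hc, AlgHom.commutes, Module.algebraMap_end_apply, Algebra.smul_def,
      Polynomial.algebraMap_apply, algebraMap_eq]
  | add a b _ _ iha ihb => rw [add_mul, iha, ihb, map_add, LinearMap.add_apply, map_add]
  | mul a b _ _ iha ihb => rw [mul_assoc, ihb, iha, map_mul, Module.End.mul_apply]

/-- The normal form `∑ fₙ(Y) Xⁿ` of `a = ∑ fₙ(y) xⁿ`, obtained by letting `a` act on `1`. -/
noncomputable def normalForm {q : K} (a : QuantumWeyl K q) : K[X][X] := oreAction q a 1

theorem normalEval_normalForm {q : K} (a : QuantumWeyl K q) :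
    normalEval (wgen K q 0) (wgen K q 1) (normalForm a) = a := by
  rw [normalForm, ← mul_normalEval, ← C_1, normalEval_C, map_one, mul_one]

theorem oreAction_normalEval (q : K) (v u : K[X][X]) :
    oreAction q (normalEval (wgen K q 0) (wgen K q 1) v) u =
      v.sum fun n f ↦ C f * (oreMulX (dilation q).toLinearMap (qDerivative q))^[n] u := by
  simp only [normalEval, eval₂AddMonoidHom_apply, eval₂_eq_sum, sum_def, map_sum, map_mul, map_pow,
    LinearMap.sum_apply, Module.End.mul_apply, Module.End.pow_apply, oreAction_x]
  refine Finset.sum_congr rfl fun n _ ↦ ?_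
  exact LinearMap.congr_fun (oreAction_aeval_y q (v.coeff n)) _

theorem degree_oreAction (q : Kˣ) (a : QuantumWeyl K (q : K)) (u : K[X][X]) :
    (oreAction (q : K) a u).degree = (normalForm a).degree + u.degree := by
  conv_lhs => rw [← normalEval_normalForm a, oreAction_normalEval]
  exact degree_sum_C_mul_iterate
    (degree_oreMulX _ (dilation_injective q.isUnit.mem_nonZeroDivisors)) _ _

theorem degree_normalForm_mul {q : Kˣ} (a b : QuantumWeyl K (q : K)) :
    (normalForm (a * b)).degree = (normalForm a).degree + (normalForm b).degree := by
  rw [normalForm, map_mul, Module.End.mul_apply, degree_oreAction]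
  rfl

theorem normalForm_eq_zero_iff {q : K} {a : QuantumWeyl K q} : normalForm a = 0 ↔ a = 0 := by
  refine ⟨fun h ↦ ?_, fun h ↦ by simp [h, normalForm]⟩
  rw [← normalEval_normalForm a, h, map_zero]

instance (q : Kˣ) : NoZeroDivisors (QuantumWeyl K (q : K)) where
  eq_zero_or_eq_zero_of_mul_eq_zero {a b} hab := by
    simpa only [← normalForm_eq_zero_iff, ← degree_eq_bot, degree_normalForm_mul,
      WithBot.add_eq_bot] using hab

theorem normalForm_one (q : K) : normalForm (1 : QuantumWeyl K q) = 1 := by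
  simp [normalForm]

theorem normalForm_aeval_y (q : K) (f : K[X]) : normalForm (aeval (wgen K q 1) f) = C f := by
  simp [normalForm, oreAction_aeval_y]

theorem exists_aeval_y_eq_of_mul_eq_one {q : Kˣ} {a b : QuantumWeyl K (q : K)} (hab : a * b = 1) :
    ∃ f : K[X], aeval (wgen K (q : K) 1) f = a := by
  have hdeg : (normalForm a).degree + (normalForm b).degree = 0 := by
    rw [← degree_normalForm_mul, hab, normalForm_one, degree_one]
  have ha : (normalForm a).degree ≤ 0 := (Nat.WithBot.add_eq_zero_iff.1 hdeg).1.le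
  exact ⟨(normalForm a).coeff 0, by
    rw [← normalEval_C (x := wgen K (q : K) 0), ← eq_C_of_degree_le_zero ha,
      normalEval_normalForm]⟩

theorem exists_algebraMap_eq_unit {q : Kˣ} (u : (QuantumWeyl K (q : K))ˣ) :
    ∃ c : Kˣ, algebraMap K (QuantumWeyl K (q : K)) c = u := by
  obtain ⟨f, hf⟩ := exists_aeval_y_eq_of_mul_eq_one u.mul_inv
  obtain ⟨g, hg⟩ := exists_aeval_y_eq_of_mul_eq_one u.inv_mul
  have hfg : f * g = 1 := by
    rw [← C_inj, ← normalForm_aeval_y (q : K), map_mul, hf, hg, u.mul_inv, normalForm_one, C_1]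
  obtain ⟨c, hc, rfl⟩ := Polynomial.isUnit_iff.1 (IsUnit.of_mul_eq_one g hfg)
  exact ⟨hc.unit, by rw [← hf, aeval_C, IsUnit.unit_spec]⟩

theorem lie_wgen_dvd_lie (q : Kˣ) (a b : QuantumWeyl K (q : K)) :
    ⁅wgen K (q : K) 0, wgen K (q : K) 1⁆ ∣ ⁅a, b⁆ :=
  lie_dvd_lie_of_qCommute (wgen_mul_wgen (q : K)) (adjoin_wgen (q : K)) a b

theorem lie_wgen_dvd_map_lie {B : Type*} [Ring B] {q : Kˣ} (φ : B →+* QuantumWeyl K (q : K))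
    (a b : B) : ⁅wgen K (q : K) 0, wgen K (q : K) 1⁆ ∣ φ ⁅a, b⁆ := by
  simpa only [Ring.lie_def, map_sub, map_mul] using lie_wgen_dvd_lie q (φ a) (φ b)

end QuantumWeyl

theorem quantumWeyl_image_of_z_general (K L : Type*) [Field K] [Field L] (p : Kˣ) (q : Lˣ)
    (θ : QuantumWeyl K (p : K) ≃+* QuantumWeyl L (q : L)) :
    ∃ l : Lˣ,
      θ (wgen K (p : K) 0 * wgen K (p : K) 1 - wgen K (p : K) 1 * wgen K (p : K) 0) =
        (l : L) • (wgen L (q : L) 0 * wgen L (q : L) 1 - wgen L (q : L) 1 * wgen L (q : L) 0) := by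
  simp only [← Ring.lie_def]
  have hqp : ⁅wgen L (q : L) 0, wgen L (q : L) 1⁆ ∣ θ ⁅wgen K (p : K) 0, wgen K (p : K) 1⁆ :=
    QuantumWeyl.lie_wgen_dvd_map_lie θ.toRingHom _ _
  have hpq : ⁅wgen K (p : K) 0, wgen K (p : K) 1⁆ ∣ θ.symm ⁅wgen L (q : L) 0, wgen L (q : L) 1⁆ :=
    QuantumWeyl.lie_wgen_dvd_map_lie θ.symm.toRingHom _ _
  obtain ⟨u, hu⟩ := associated_of_dvd_dvd hqp (by simpa using map_dvd θ hpq)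
  obtain ⟨l, hl⟩ := QuantumWeyl.exists_algebraMap_eq_unit u
  exact ⟨l, by rw [Algebra.smul_def, Algebra.commutes, hl, hu]⟩

/-- for `p, q` non-roots of unity and `θ : A_1^p(K) → A_1^q(K)`
an isomorphism, there is `λ ∈ Kˣ` with `θ(XY - YX) = λ·(xy - yx)`. -/
theorem quantumWeyl_image_of_z (K : Type*) [Field K] [CharZero K] (p q : Kˣ)
    (hp : ∀ n : ℕ, 0 < n → p ^ n ≠ 1) (hq : ∀ n : ℕ, 0 < n → q ^ n ≠ 1)
    (θ : QuantumWeyl K (p : K) ≃ₐ[K] QuantumWeyl K (q : K)) :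
    ∃ l : Kˣ,
      θ (wgen K (p : K) 0 * wgen K (p : K) 1 - wgen K (p : K) 1 * wgen K (p : K) 0) =
        (l : K) • (wgen K (q : K) 0 * wgen K (q : K) 1 - wgen K (q : K) 1 * wgen K (q : K) 0) :=
  quantumWeyl_image_of_z_general K K p q θ.toRingEquiv
end

section
/- Let K be a field of characteristic 0 and let p, q ∈ Kˣ be roots of unity with p ∉ {1, −1} and q ∉ {1, −1}. If the quantum Weyl algebras A_1^p(K) and A_1^q(K) are isomorphic as K-algebras, then p is a positive integer power of q, q is a positive integer power of p, and consequently p and q have the same multiplicative order. -/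
/-!
With `w = y x`, the algebra `A_1^q(K)` maps to the skew Laurent ring `K[w][z, z⁻¹; σ]`, where
`z w = σ(w) z` and `σ(w) = q w + 1`, by `x ↦ z` and `y ↦ w z⁻¹`; the images of `x` and `y` do not
commute. The generators of `A_1^p(K)` satisfy `x c = p c x` for `c = x y - y x`, so an isomorphism
`A_1^p(K) ≃ A_1^q(K)` gives nonzero elements `a`, `b` of the skew Laurent ring with `a b = p b a`.
Comparing top terms in `z`, say `f z^m` and `g z^n`, gives `f σ^m(g) = p g σ^n(f)` in `K[w]`. As `σ`
multiplies the leading coefficient of a polynomial of degree `d` by `q^d`, comparing leading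
coefficients in `w` shows that `p` is an integer power of `q`. By symmetry `p` and `q` generate
the same subgroup of `Kˣ`.
-/

section SkewMonoidAlgebra

open SkewMonoidAlgebra

variable {R G : Type*}

lemma single_one_mul_single_inv [Semiring R] [Group G] [MulSemiringAction G R] (z : G) (w : R) :
    single z (1 : R) * single z⁻¹ w = single 1 (z • w) := by
  rw [single_mul_single, mul_inv_cancel, one_mul]

lemma single_inv_mul_single_one [Semiring R] [Group G] [MulSemiringAction G R] (z : G) (w : R) :
    single z⁻¹ w * single z (1 : R) = single 1 w := by
  rw [single_mul_single, inv_mul_cancel, smul_one, mul_one]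

lemma coeff_mul_of_isGreatest_support [Semiring R] [Monoid G] [PartialOrder G] [MulLeftStrictMono G]
    [MulRightStrictMono G] [MulSemiringAction G R] {a b : SkewMonoidAlgebra R G} {m n : G}
    (hm : IsGreatest (a.support : Set G) m) (hn : IsGreatest (b.support : Set G) n) :
    (a * b).coeff (m * n) = a.coeff m * m • b.coeff n := by
  classical
  have eq_and_eq {i j : G} (hi : i ∈ a.support) (hj : j ∈ b.support) (hij : i * j = m * n) :
      i = m ∧ j = n :=
    (mul_eq_mul_iff_eq_and_eq (hm.2 hi) (hn.2 hj)).1 hij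
  rw [coeff_mul, sum_def', Finset.sum_eq_single_of_mem m hm.1, sum_def',
    Finset.sum_eq_single_of_mem n hn.1, if_pos rfl]
  · exact fun j hj hne ↦ if_neg fun h ↦ hne (eq_and_eq hm.1 hj h).2
  · exact fun i hi hne ↦ Finset.sum_eq_zero fun j hj ↦ if_neg fun h ↦ hne (eq_and_eq hi hj h).1

lemma exists_isGreatest_support [AddMonoid R] [LinearOrder G] {a : SkewMonoidAlgebra R G}
    (ha : a ≠ 0) : ∃ m, IsGreatest (a.support : Set G) m :=
  ⟨_, a.support.isGreatest_max' (Finset.nonempty_iff_ne_empty.2 (support_eq_empty.not.2 ha))⟩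

lemma exists_mul_smul_eq_smul_mul_smul {S : Type*} [Semiring R] [CommMonoid G] [LinearOrder G]
    [IsOrderedCancelMonoid G] [MulSemiringAction G R] [SMulZeroClass S R] {c : S}
    {a b : SkewMonoidAlgebra R G} (ha : a ≠ 0) (hb : b ≠ 0) (hab : a * b = c • (b * a)) :
    ∃ (m n : G) (f g : R), f ≠ 0 ∧ g ≠ 0 ∧ f * m • g = c • (g * n • f) := by
  obtain ⟨m, hm⟩ := exists_isGreatest_support ha
  obtain ⟨n, hn⟩ := exists_isGreatest_support hb
  refine ⟨m, n, a.coeff m, b.coeff n, mem_support_iff.1 hm.1, mem_support_iff.1 hn.1, ?_⟩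
  rw [← coeff_mul_of_isGreatest_support hm hn, ← coeff_mul_of_isGreatest_support hn hm, hab,
    coeff_smul, Finsupp.smul_apply, mul_comm n m]

end SkewMonoidAlgebra

section LeadingCoeff

open Polynomial

variable {R : Type*} [CommRing R] [IsDomain R]

lemma mem_of_mul_eq_smul_mul_of_leadingCoeff_smul {G : Type*} [CommMonoid G] [LinearOrder G]
    [IsOrderedCancelMonoid G] [MulSemiringAction G R[X]] {H : Subgroup Rˣ}
    (hH : ∀ (m : G) (f : R[X]), ∃ u ∈ H, (m • f).leadingCoeff = u * f.leadingCoeff)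
    {c : Rˣ} {a b : SkewMonoidAlgebra R[X] G} (ha : a ≠ 0) (hb : b ≠ 0)
    (hab : a * b = (c : R) • (b * a)) : c ∈ H := by
  obtain ⟨m, n, f, g, hf, hg, hfg⟩ := exists_mul_smul_eq_smul_mul_smul ha hb hab
  obtain ⟨u, hu, hmg⟩ := hH m g
  obtain ⟨v, hv, hnf⟩ := hH n f
  have hlc : f.leadingCoeff * g.leadingCoeff * u = f.leadingCoeff * g.leadingCoeff * (c * v) := by
    have hfg' := congrArg leadingCoeff hfg
    rw [smul_eq_C_mul, leadingCoeff_mul, leadingCoeff_mul, leadingCoeff_mul, leadingCoeff_C, hmg,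
      hnf] at hfg'
    linear_combination hfg'
  have huv : u = c * v := Units.ext <| mul_left_cancel₀
    (mul_ne_zero (leadingCoeff_ne_zero.2 hf) (leadingCoeff_ne_zero.2 hg)) hlc
  rw [eq_mul_inv_of_mul_eq huv.symm]
  exact H.mul_mem hu (H.inv_mem hv)

/-- The automorphism `X ↦ u X + b` of `R[X]`: Mathlib's `algEquivCMulXAddC`, with the invertibility
of the coefficient of `X` carried by the unit `u`. -/
noncomputable def affineSubst {R : Type*} [CommRing R] (u : Rˣ) (b : R) : R[X] ≃ₐ[R] R[X] :=
  letI := u.invertible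
  algEquivCMulXAddC (u : R) b

lemma affineSubst_apply {R : Type*} [CommRing R] (u : Rˣ) (b : R) (f : R[X]) :
    affineSubst u b f = f.comp (C (u : R) * X + C b) := by
  rw [affineSubst, algEquivCMulXAddC_apply, comp_eq_aeval]

lemma leadingCoeff_affineSubst (u : Rˣ) (b : R) (f : R[X]) :
    (affineSubst u b f).leadingCoeff = (u ^ f.natDegree : Rˣ) * f.leadingCoeff := by
  have hdeg : (C (u : R) * X + C b).natDegree ≠ 0 := by
    rw [natDegree_linear u.ne_zero]
    exact one_ne_zero
  rw [affineSubst_apply, leadingCoeff_comp hdeg, leadingCoeff_linear u.ne_zero, mul_comm,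
    Units.val_pow_eq_pow_val]

lemma exists_leadingCoeff_affineSubst_zpow (u : Rˣ) (b : R) (n : ℤ) (f : R[X]) :
    ∃ v ∈ Subgroup.zpowers u, ((affineSubst u b ^ n) f).leadingCoeff = v * f.leadingCoeff := by
  refine zpow_induction_left (P := fun τ : R[X] ≃ₐ[R] R[X] ↦ ∃ v ∈ Subgroup.zpowers u,
    (τ f).leadingCoeff = v * f.leadingCoeff) ⟨1, one_mem _, by simp⟩ ?_ ?_ n
  · rintro τ ⟨v, hv, hτ⟩
    refine ⟨u ^ (τ f).natDegree * v, mul_mem (Subgroup.npow_mem_zpowers u _) hv, ?_⟩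
    rw [AlgEquiv.mul_apply, leadingCoeff_affineSubst, hτ, Units.val_mul, mul_assoc]
  · rintro τ ⟨v, hv, hτ⟩
    set g := ((affineSubst u b)⁻¹ * τ) f with hg
    have hτg : τ f = affineSubst u b g := by
      rw [hg, ← AlgEquiv.mul_apply, mul_inv_cancel_left]
    refine ⟨(u ^ g.natDegree)⁻¹ * v, mul_mem (inv_mem (Subgroup.npow_mem_zpowers u _)) hv, ?_⟩
    rw [Units.val_mul, mul_assoc, ← hτ, hτg, leadingCoeff_affineSubst, Units.inv_mul_cancel_left]

end LeadingCoeff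

lemma mul_commutator_eq_smul_commutator_mul {R A : Type*} [CommRing R] [Ring A] [Algebra R A]
    {q : R} {x y : A} (h : x * y = q • (y * x) + 1) :
    x * (x * y - y * x) = q • ((x * y - y * x) * x) := by
  have hxyx : x * (y * x) = q • (y * x * x) + x := by
    rw [← mul_assoc, h, add_mul, smul_mul_assoc, one_mul]
  rw [h, mul_sub, mul_add, mul_smul_comm, hxyx, sub_mul, add_mul, smul_mul_assoc, mul_one, one_mul]
  module

namespace QuantumWeyl

variable {K : Type*} [Field K] {q : K} {A : Type*}

lemma wgen_zero_mul_wgen_one :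
    wgen K q 0 * wgen K q 1 = q • (wgen K q 1 * wgen K q 0) + 1 := by
  simpa [wgen] using RingQuot.mkAlgHom_rel K (WeylRel.rel (K := K) (q := q))

/-- The universal property of `A_1^q(K)`: a pair `x, y` with `x y = q y x + 1` in a `K`-algebra
determines an algebra homomorphism out of `A_1^q(K)`. -/
noncomputable def lift [Semiring A] [Algebra K A] (x y : A) (h : x * y = q • (y * x) + 1) :
    QuantumWeyl K q →ₐ[K] A :=
  RingQuot.liftAlgHom K ⟨FreeAlgebra.lift K ![x, y], by rintro _ _ ⟨⟩; simpa using h⟩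

section lift

variable [Semiring A] [Algebra K A] {x y : A} (h : x * y = q • (y * x) + 1)

lemma lift_wgen_zero : lift x y h (wgen K q 0) = x := by
  simp [lift, wgen]

lemma lift_wgen_one : lift x y h (wgen K q 1) = y := by
  simp [lift, wgen]

end lift

lemma adjoin_range_wgen : Algebra.adjoin K (Set.range (wgen K q)) = ⊤ := by
  have : wgen K q = RingQuot.mkAlgHom K (WeylRel K q) ∘ FreeAlgebra.ι K := rfl
  rw [this, Set.range_comp, ← AlgHom.map_adjoin, FreeAlgebra.adjoin_range_ι, Algebra.map_top,
    AlgHom.range_eq_top]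
  exact RingQuot.mkAlgHom_surjective K _

lemma commute_map [Semiring A] [Algebra K A] (ψ : QuantumWeyl K q →ₐ[K] A)
    (h : Commute (ψ (wgen K q 0)) (ψ (wgen K q 1))) (a b : QuantumWeyl K q) :
    Commute (ψ a) (ψ b) := by
  have mem_adjoin (a : QuantumWeyl K q) :
      ψ a ∈ Algebra.adjoin K (Set.range fun i ↦ ψ (wgen K q i)) := by
    rw [← Function.comp_def, Set.range_comp, ← AlgHom.map_adjoin, adjoin_range_wgen]
    exact ⟨a, trivial, rfl⟩
  have gen (i j : Fin 2) : Commute (ψ (wgen K q i)) (ψ (wgen K q j)) := by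
    fin_cases i <;> fin_cases j
    exacts [.refl _, h, h.symm, .refl _]
  refine Algebra.commute_of_mem_adjoin_of_forall_mem_commute (mem_adjoin b) ?_
  rintro _ ⟨j, rfl⟩
  refine (Algebra.commute_of_mem_adjoin_of_forall_mem_commute (mem_adjoin a) ?_).symm
  rintro _ ⟨i, rfl⟩
  exact gen j i

section SkewMonoidAlgebra

open SkewMonoidAlgebra

variable {R G : Type*} [Semiring R] [Algebra K R] [Group G] [MulSemiringAction G R]
  [SMulCommClass G K R] {z : G} {w : R}

/-- The realisation of `A_1^q(K)` as a generalised Weyl algebra: over a ring `R` on which `z` acts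
by an automorphism taking `w` to `q w + 1`, send `x` to `z` and `y` to `w z⁻¹`, the latter being
`single z⁻¹ w` since Mathlib writes coefficients on the left. Then `y x` goes to `w`. -/
noncomputable def toSkewMonoidAlgebra (hzw : z • w = q • w + 1) :
    QuantumWeyl K q →ₐ[K] SkewMonoidAlgebra R G :=
  lift (single z 1) (single z⁻¹ w) <| by
    rw [single_one_mul_single_inv, single_inv_mul_single_one, hzw, single_add, smul_single, one_def]

lemma not_commute_toSkewMonoidAlgebra (hzw : z • w = q • w + 1) (hw : z • w ≠ w) :
    ¬ Commute (toSkewMonoidAlgebra hzw (wgen K q 0)) (toSkewMonoidAlgebra hzw (wgen K q 1)) := by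
  rw [toSkewMonoidAlgebra, lift_wgen_zero, lift_wgen_one, Commute, SemiconjBy,
    single_one_mul_single_inv, single_inv_mul_single_one, (single_injective 1).eq_iff]
  exact hw

end SkewMonoidAlgebra

open Polynomial

lemma smul_X_add_one_ne_X (q : K) : q • (X : K[X]) + 1 ≠ X := fun h ↦ by
  simpa using congrArg (coeff · 0) h

theorem mem_of_surjective_of_leadingCoeff_smul {G : Type*} [CommGroup G] [LinearOrder G]
    [IsOrderedMonoid G] [MulSemiringAction G K[X]] [SMulCommClass G K K[X]] {H : Subgroup Kˣ}
    (hH : ∀ (m : G) (f : K[X]), ∃ u ∈ H, (m • f).leadingCoeff = u * f.leadingCoeff)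
    {z : G} (hz : z • (X : K[X]) = q • X + 1) {p : Kˣ}
    (φ : QuantumWeyl K (p : K) →ₐ[K] QuantumWeyl K q) (hφ : Function.Surjective φ) : p ∈ H := by
  set ρ := toSkewMonoidAlgebra hz
  set ψ := ρ.comp φ
  have hψ : ¬ Commute (ψ (wgen K p 0)) (ψ (wgen K p 1)) := fun h ↦ by
    obtain ⟨a, ha⟩ := hφ (wgen K q 0)
    obtain ⟨b, hb⟩ := hφ (wgen K q 1)
    refine not_commute_toSkewMonoidAlgebra hz (hz ▸ smul_X_add_one_ne_X q) ?_
    rw [← ha, ← hb]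
    exact commute_map ψ h a b
  have hrel : ψ (wgen K p 0) * ψ (wgen K p 1) =
      (p : K) • (ψ (wgen K p 1) * ψ (wgen K p 0)) + 1 := by
    rw [← map_mul, wgen_zero_mul_wgen_one, map_add, map_smul, map_mul, map_one]
  have hx : ψ (wgen K p 0) ≠ 0 := fun h ↦ hψ (h ▸ Commute.zero_left _)
  exact mem_of_mul_eq_smul_mul_of_leadingCoeff_smul hH hx (sub_ne_zero.2 hψ)
    (mul_commutator_eq_smul_commutator_mul hrel)

theorem mem_zpowers_of_surjective {p q : Kˣ}
    (φ : QuantumWeyl K (p : K) →ₐ[K] QuantumWeyl K (q : K)) (hφ : Function.Surjective φ) :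
    p ∈ Subgroup.zpowers q := by
  let σ := affineSubst q (1 : K)
  let : MulSemiringAction (Multiplicative ℤ) K[X] :=
    MulSemiringAction.compHom _ (zpowersHom _ σ)
  have smul_eq_zpow_apply (n : Multiplicative ℤ) (f : K[X]) : n • f = (σ ^ n.toAdd) f := rfl
  have : SMulCommClass (Multiplicative ℤ) K K[X] :=
    ⟨fun n c f ↦ map_smul (σ ^ n.toAdd) c f⟩
  have hz : Multiplicative.ofAdd (1 : ℤ) • (X : K[X]) = (q : K) • X + 1 := by
    rw [smul_eq_zpow_apply, toAdd_ofAdd, zpow_one, affineSubst_apply, X_comp, smul_eq_C_mul, C_1]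
  exact mem_of_surjective_of_leadingCoeff_smul
    (fun n f ↦ exists_leadingCoeff_affineSubst_zpow q 1 n.toAdd f) hz φ hφ

end QuantumWeyl

lemma exists_pos_eq_pow_of_mem_zpowers {G : Type*} [Group G] {x y : G} (hx : IsOfFinOrder x)
    (hy : y ∈ Subgroup.zpowers x) : ∃ n : ℕ, 0 < n ∧ y = x ^ n := by
  obtain ⟨n, rfl⟩ := hx.mem_powers_iff_mem_zpowers.2 hy
  exact ⟨n + orderOf x, Nat.add_pos_right n hx.orderOf_pos, by simp [pow_add, pow_orderOf_eq_one]⟩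

theorem quantumWeyl_iso_root_powers_general {K : Type*} [Field K] {p q : Kˣ}
    (φ : QuantumWeyl K (p : K) ≃ₐ[K] QuantumWeyl K (q : K)) :
    Subgroup.zpowers p = Subgroup.zpowers q :=
  le_antisymm
    (Subgroup.zpowers_le.2 (QuantumWeyl.mem_zpowers_of_surjective φ φ.surjective))
    (Subgroup.zpowers_le.2 (QuantumWeyl.mem_zpowers_of_surjective φ.symm φ.symm.surjective))

/-- for `p, q` roots of unity, not equal to `±1`, if
`A_1^p(K) ≅ A_1^q(K)` then `p` is a positive power of `q`, `q` is a positive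
power of `p`, and `p` and `q` have the same multiplicative order. -/
theorem quantumWeyl_iso_root_powers (K : Type*) [Field K] [CharZero K] (p q : Kˣ)
    (hp : ∃ n : ℕ, 0 < n ∧ p ^ n = 1) (hq : ∃ n : ℕ, 0 < n ∧ q ^ n = 1)
    (hp1 : (p : K) ≠ 1) (hp2 : (p : K) ≠ -1) (hq1 : (q : K) ≠ 1) (hq2 : (q : K) ≠ -1)
    (h : Nonempty (QuantumWeyl K (p : K) ≃ₐ[K] QuantumWeyl K (q : K))) :
    (∃ m : ℕ, 0 < m ∧ p = q ^ m) ∧ (∃ t : ℕ, 0 < t ∧ q = p ^ t) ∧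
      orderOf p = orderOf q := by
  obtain ⟨φ⟩ := h
  have hpq := quantumWeyl_iso_root_powers_general φ
  refine ⟨exists_pos_eq_pow_of_mem_zpowers (isOfFinOrder_iff_pow_eq_one.2 hq) ?_,
    exists_pos_eq_pow_of_mem_zpowers (isOfFinOrder_iff_pow_eq_one.2 hp) ?_, ?_⟩
  · exact hpq ▸ Subgroup.mem_zpowers p
  · exact hpq ▸ Subgroup.mem_zpowers q
  · rw [← Nat.card_zpowers, hpq, Nat.card_zpowers]
end

section
/- Let K be a field, n ≥ 1, and let p and q be multiplicatively antisymmetric n×n matrices over Kˣ. The quantum affine spaces O_p(K^n) and O_q(K^n) are isomorphic as K-algebras if and only if there exists a permutation σ of {1,…,n} such that p_{ij} = q_{σ(i)σ(j)} for all 1 ≤ i, j ≤ n. -/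
/-- The defining relations of quantum affine `n`-space `O_p(K^n)` for a matrix
of units `p`: `x_i x_j = p_{ij}·x_j x_i` for all `i, j`. -/
inductive QAffRel (K : Type*) [Field K] (n : ℕ) (p : Fin n → Fin n → Kˣ) :
    FreeAlgebra K (Fin n) → FreeAlgebra K (Fin n) → Prop
  | rel (i j : Fin n) :
      QAffRel K n p (FreeAlgebra.ι K i * FreeAlgebra.ι K j)
        ((p i j : K) • (FreeAlgebra.ι K j * FreeAlgebra.ι K i))

/-- Quantum affine `n`-space `O_p(K^n)`. -/
abbrev QAff (K : Type*) [Field K] (n : ℕ) (p : Fin n → Fin n → Kˣ) := RingQuot (QAffRel K n p)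

/-- The images of the free generators in `O_p(K^n)`. -/
noncomputable def qaffGen (K : Type*) [Field K] (n : ℕ) (p : Fin n → Fin n → Kˣ) (i : Fin n) :
    QAff K n p :=
  RingQuot.mkAlgHom K (QAffRel K n p) (FreeAlgebra.ι K i)

/-!
Call a matrix `T` `q`-symmetric if `T i j = q i j * T j i`; these are the functionals on the span of
the words `x_i x_j` that vanish on the defining relations of `O_q(K^n)`. Given a surjection
`φ : O_p(K^n) → O_q(K^n)`, let `J` be the invertible matrix of linear parts of the `φ(x_i)`. If
`p_{ij} ≠ 1`, comparing terms of degree at most one in `φ(x_i)φ(x_j) = p_{ij} φ(x_j)φ(x_i)` shows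
that `φ(x_i)` and `φ(x_j)` have no constant term; hence in all cases the terms of degree two
say that `J T Jᵀ` is `p`-symmetric whenever `T` is `q`-symmetric. Testing this on the simplest
`q`-symmetric matrices gives `p_{ij} = q_{km}` whenever `J_{ik}` and `J_{jm}` are both nonzero, and
since `det J ≠ 0` some permutation `σ` has `J_{i,σ(i)} ≠ 0` for all `i`.
-/

section

open scoped Matrix

theorem mul_single_mul_apply {S ι κ μ : Type*} [Semiring S] [Fintype ι] [DecidableEq ι]
    (A : Matrix κ ι S) (B : Matrix ι μ S) (k m : ι) (c : S) (i : κ) (j : μ) :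
    (A * Matrix.single k m c * B) i j = A i k * c * B m j := by
  simp [Matrix.mul_apply, Matrix.single_apply, ite_and]

variable {ι κ R : Type*} [CommRing R] [Fintype ι]

theorem mul_mul_transpose_apply (A : Matrix κ ι R) (T : Matrix ι ι R) (i j : κ) :
    (A * T * Aᵀ) i j = A i ⬝ᵥ T *ᵥ A j := by
  rw [Matrix.mul_apply', Matrix.mul_apply_eq_vecMul, Matrix.dotProduct_mulVec]
  rfl

theorem exists_perm_apply_ne_zero_of_det_ne_zero [DecidableEq ι] {A : Matrix ι ι R}
    (hA : A.det ≠ 0) : ∃ σ : Equiv.Perm ι, ∀ i, A i (σ i) ≠ 0 := by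
  contrapose! hA
  rw [← Matrix.det_transpose, Matrix.det_apply]
  refine Finset.sum_eq_zero fun σ _ => ?_
  obtain ⟨i, hi⟩ := hA σ
  rw [Finset.prod_eq_zero (Finset.mem_univ i) (by simpa using hi), smul_zero]

theorem apply_eq_zero_of_minors_eq_zero {A : Matrix κ ι R} (hinj : Function.Injective A.mulVec)
    {i : κ} {k m : ι} (hkm : k ≠ m) (hminors : ∀ j, A i k * A j m = A i m * A j k) : A i k = 0 := by
  classical
  have hker : Pi.single m (A i k) - Pi.single k (A i m) = (0 : ι → R) := hinj <| by
    ext j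
    simp only [Matrix.mulVec_sub, Matrix.mulVec_zero, Pi.sub_apply, Matrix.mulVec_single,
      Pi.smul_apply, Matrix.col_apply, MulOpposite.smul_eq_mul_unop, MulOpposite.unop_op,
      Pi.zero_apply]
    linear_combination hminors j
  simpa [hkm.symm] using congrFun hker m

end

section QSymm

open scoped Matrix

variable {ι κ R : Type*} [CommRing R]

/-- A matrix `T` is `q`-symmetric if, seen as the functional `x_i x_j ↦ T i j`, it vanishes on all
the `q`-commutators `x_i x_j - q_{ij} x_j x_i`. -/
def IsQSymm (q : ι → ι → Rˣ) (T : Matrix ι ι R) : Prop :=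
  ∀ i j, T i j = q i j * T j i

/-- Congruence by `A` takes `q`-symmetric matrices to `p`-symmetric ones. For the matrix `A` of
linear parts of a homomorphism `O_p → O_q`, this is what the terms of degree two provide. -/
def CongrQSymm [Fintype ι] (p : κ → κ → Rˣ) (q : ι → ι → Rˣ) (A : Matrix κ ι R) : Prop :=
  ∀ T, IsQSymm q T → IsQSymm p (A * T * Aᵀ)

variable {p : κ → κ → Rˣ} {q : ι → ι → Rˣ}

theorem isQSymm_single [DecidableEq ι] {k : ι} (hq : q k k = 1) :
    IsQSymm q (Matrix.single k k 1) := by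
  intro i j
  by_cases hi : k = i <;> by_cases hj : k = j <;> simp_all

theorem isQSymm_single_add_single [DecidableEq ι] {k m : ι} (hq : q k m * q m k = 1) :
    IsQSymm q (Matrix.single k m 1 + Matrix.single m k (q m k : R)) := by
  have hq' : (q k m : R) * q m k = 1 := by rw [← Units.val_mul, hq, Units.val_one]
  intro i j
  by_cases hki : k = i <;> by_cases hkj : k = j <;> by_cases hmi : m = i <;>
    by_cases hmj : m = j <;> subst_vars <;> simp_all [mul_add, add_comm]

namespace CongrQSymm

variable [Fintype ι] {A : Matrix κ ι R}

theorem apply_mul_apply (h : CongrQSymm p q A) {k : ι} (hq : q k k = 1) (i j : κ) :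
    A i k * A j k = p i j * (A j k * A i k) := by
  classical
  simpa [mul_single_mul_apply] using h _ (isQSymm_single hq) i j

theorem exchange (h : CongrQSymm p q A) {k m : ι} (hq : q k m * q m k = 1) (i j : κ) :
    A i k * A j m + A i m * q m k * A j k = p i j * (A j k * A i m + A j m * q m k * A i k) := by
  classical
  simpa [mul_single_mul_apply, Matrix.mul_add, Matrix.add_mul] using
    h _ (isQSymm_single_add_single hq) i j

variable [NoZeroDivisors R]

theorem apply_mul_apply_eq_zero (h : CongrQSymm p q A) {k : ι} (hq : q k k = 1) {i j : κ}
    (hp : p i j ≠ 1) : A i k * A j k = 0 := by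
  have hp' : 1 - (p i j : R) ≠ 0 := sub_ne_zero.2 (Ne.symm (Units.val_eq_one.not.2 hp))
  refine (mul_eq_zero.1 ?_).resolve_left hp'
  linear_combination h.apply_mul_apply hq i j

theorem apply_eq_zero_of_apply_ne_zero (h : CongrQSymm p q A) (hq1 : ∀ k, q k k = 1)
    (hq2 : ∀ k m, q k m * q m k = 1) (hinj : Function.Injective A.mulVec) {i : κ} {k m : ι}
    (hq : q m k ≠ 1) (hik : A i k ≠ 0) : A i m = 0 := by
  have hne : k ≠ m := by
    rintro rfl
    exact hq (hq1 k)
  have hq' : 1 - (q m k : R) ≠ 0 := sub_ne_zero.2 (Ne.symm (Units.val_eq_one.not.2 hq))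
  by_contra him
  refine hik (apply_eq_zero_of_minors_eq_zero hinj hne fun j => ?_)
  by_cases hp : p i j = 1
  · have hex := h.exchange (hq2 k m) i j
    rw [hp, Units.val_one] at hex
    refine mul_left_cancel₀ hq' ?_
    linear_combination hex
  · have hjk := (mul_eq_zero.1 (h.apply_mul_apply_eq_zero (hq1 k) hp)).resolve_left hik
    have hjm := (mul_eq_zero.1 (h.apply_mul_apply_eq_zero (hq1 m) hp)).resolve_left him
    rw [hjk, hjm, mul_zero, mul_zero]

theorem eq_of_apply_ne_zero (h : CongrQSymm p q A) (hq1 : ∀ k, q k k = 1)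
    (hq2 : ∀ k m, q k m * q m k = 1) (hinj : Function.Injective A.mulVec) {i j : κ} {k m : ι}
    (hik : A i k ≠ 0) (hjm : A j m ≠ 0) : p i j = q k m := by
  suffices hpq : p i j * q m k = 1 from mul_right_cancel (hpq.trans (hq2 k m).symm)
  by_cases hq : q m k = 1 ∧ p i j = 1
  · rw [hq.1, hq.2, mul_one]
  have hzero : A i m * A j k = 0 := by
    by_cases hp : p i j = 1
    · rw [h.apply_eq_zero_of_apply_ne_zero hq1 hq2 hinj (fun e => hq ⟨e, hp⟩) hik, zero_mul]
    · rw [(mul_eq_zero.1 (h.apply_mul_apply_eq_zero (hq1 k) hp)).resolve_left hik, mul_zero]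
  have hmul : (1 - (p i j : R) * q m k) * (A i k * A j m) = 0 := by
    linear_combination h.exchange (hq2 k m) i j + (p i j - q m k : R) * hzero
  have hpq := (mul_eq_zero.1 hmul).resolve_right (mul_ne_zero hik hjm)
  exact Units.ext (by simpa using (sub_eq_zero.1 hpq).symm)

theorem exists_perm [DecidableEq ι] {p q : ι → ι → Rˣ} {A : Matrix ι ι R} (h : CongrQSymm p q A)
    (hq1 : ∀ k, q k k = 1) (hq2 : ∀ k m, q k m * q m k = 1) (hA : A.det ≠ 0) :
    ∃ σ : Equiv.Perm ι, ∀ i j, p i j = q (σ i) (σ j) := by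
  obtain ⟨σ, hσ⟩ := exists_perm_apply_ne_zero_of_det_ne_zero hA
  have hinj : Function.Injective A.mulVec := Matrix.mulVec_injective_of_det_ne_zero hA
  exact ⟨σ, fun i j => h.eq_of_apply_ne_zero hq1 hq2 hinj (hσ i) (hσ j)⟩

end CongrQSymm

end QSymm

namespace QAff

open scoped Matrix

variable {K : Type*} [Field K] {n : ℕ} {p q : Fin n → Fin n → Kˣ}
  {B : Type*} [Semiring B] [Algebra K B]

theorem gen_mul_gen (p : Fin n → Fin n → Kˣ) (i j : Fin n) :
    qaffGen K n p i * qaffGen K n p j = (p i j : K) • (qaffGen K n p j * qaffGen K n p i) := by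
  simpa [qaffGen] using RingQuot.mkAlgHom_rel K (QAffRel.rel (p := p) i j)

/-- The algebra homomorphism out of `O_p(K^n)` sending the generators to given elements that
satisfy the defining relations. -/
noncomputable def lift (g : Fin n → B) (h : ∀ i j, g i * g j = (p i j : K) • (g j * g i)) :
    QAff K n p →ₐ[K] B :=
  RingQuot.liftAlgHom K ⟨FreeAlgebra.lift K g, by rintro _ _ ⟨i, j⟩; simp [h i j]⟩

@[simp]
theorem lift_gen (g : Fin n → B) (h : ∀ i j, g i * g j = (p i j : K) • (g j * g i)) (i : Fin n) :
    lift g h (qaffGen K n p i) = g i := by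
  simp [lift, qaffGen]

theorem algHom_ext {f g : QAff K n p →ₐ[K] B}
    (h : ∀ i, f (qaffGen K n p i) = g (qaffGen K n p i)) : f = g :=
  RingQuot.ringQuot_ext' _ _ _ (FreeAlgebra.hom_ext (funext h))

theorem induction_on {motive : QAff K n p → Prop} (f : QAff K n p)
    (algebraMap : ∀ r, motive (algebraMap K _ r)) (gen : ∀ i, motive (qaffGen K n p i))
    (mul : ∀ f g, motive f → motive g → motive (f * g))
    (add : ∀ f g, motive f → motive g → motive (f + g)) : motive f := by
  obtain ⟨a, rfl⟩ := RingQuot.mkAlgHom_surjective K (QAffRel K n p) f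
  induction a with
  | grade0 r => simpa only [AlgHom.commutes] using algebraMap r
  | grade1 i => exact gen i
  | mul a b ha hb => simpa only [map_mul] using mul _ _ ha hb
  | add a b ha hb => simpa only [map_add] using add _ _ ha hb

/-- Permuting the generators is an isomorphism of quantum affine spaces if it matches their
parameter matrices. -/
noncomputable def reindex (σ : Equiv.Perm (Fin n)) (h : ∀ i j, p i j = q (σ i) (σ j)) :
    QAff K n p ≃ₐ[K] QAff K n q :=
  AlgEquiv.ofAlgHom
    (lift (fun i => qaffGen K n q (σ i)) fun i j => by rw [h, gen_mul_gen])
    (lift (fun i => qaffGen K n p (σ.symm i)) fun i j => by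
      simpa [h] using gen_mul_gen p (σ.symm i) (σ.symm j))
    (algHom_ext fun i => by simp) (algHom_ext fun i => by simp)

/-- Truncation of `O_q(K^n)` modulo terms of degree at least two. -/
noncomputable def linearTruncation (q : Fin n → Fin n → Kˣ) :
    QAff K n q →ₐ[K] TrivSqZeroExt K (Fin n → K) :=
  lift (fun i => TrivSqZeroExt.inr (Pi.single i 1)) fun i j => by simp

/-- The constant term of an element of `O_q(K^n)`. -/
noncomputable def constantCoeff (q : Fin n → Fin n → Kˣ) : QAff K n q →ₐ[K] K :=
  (TrivSqZeroExt.fstHom K K (Fin n → K)).comp (linearTruncation q)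

/-- The vector of coefficients of the generators in an element of `O_q(K^n)`. -/
noncomputable def linearPart (q : Fin n → Fin n → Kˣ) : QAff K n q →ₗ[K] Fin n → K :=
  TrivSqZeroExt.sndHom K (Fin n → K) ∘ₗ (linearTruncation q).toLinearMap

@[simp]
theorem constantCoeff_gen (i : Fin n) : constantCoeff q (qaffGen K n q i) = 0 := by
  simp [constantCoeff, linearTruncation]

@[simp]
theorem linearPart_gen (i : Fin n) : linearPart q (qaffGen K n q i) = Pi.single i 1 := by
  simp [linearPart, linearTruncation]

@[simp]
theorem linearPart_one : linearPart q 1 = 0 := by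
  simp [linearPart]

@[simp]
theorem linearPart_mul (f g : QAff K n q) :
    linearPart q (f * g) =
      constantCoeff q f • linearPart q g + constantCoeff q g • linearPart q f := by
  simp [linearPart, constantCoeff]

theorem linearPart_surjective : Function.Surjective (linearPart q) := fun v =>
  ⟨∑ i, v i • qaffGen K n q i, by simp [← pi_eq_sum_univ']⟩

theorem constantCoeff_eq_zero_of_mul_eq_smul_mul {f g : QAff K n q} {c : K}
    (h : f * g = c • (g * f)) (hc : c ≠ 1) (hf : linearPart q f ≠ 0) (hg : linearPart q g ≠ 0) :
    constantCoeff q f = 0 ∧ constantCoeff q g = 0 := by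
  have hc' : 1 - c ≠ 0 := sub_ne_zero.2 hc.symm
  have hconst : constantCoeff q f * constantCoeff q g = 0 := by
    have := congrArg (constantCoeff q) h
    simp only [map_mul, map_smul, smul_eq_mul] at this
    refine (mul_eq_zero.1 ?_).resolve_left hc'
    linear_combination this
  have hlin : constantCoeff q f • linearPart q g + constantCoeff q g • linearPart q f = 0 := by
    have := congrArg (linearPart q) h
    simp only [linearPart_mul, map_smul] at this
    refine (smul_eq_zero.1 ?_).resolve_left hc'
    rw [sub_smul, one_smul, sub_eq_zero]
    exact this.trans (by rw [add_comm])
  rcases mul_eq_zero.1 hconst with hf0 | hg0 <;> simp_all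

variable {T : Matrix (Fin n) (Fin n) K}

/-- The representation of `O_q(K^n)` on `K × K^n × K` in which `x_i` sends `1` to the basis vector
`e_i` and `e_j` to `T i j` in the last summand. -/
noncomputable def quadraticRep (hT : IsQSymm q T) :
    QAff K n q →ₐ[K] Module.End K (K × (Fin n → K) × K) :=
  lift
    (fun i => (0 : _ →ₗ[K] K).prod
      ((LinearMap.single K _ i ∘ₗ LinearMap.fst K K _).prod
        (LinearMap.proj i ∘ₗ T.mulVecLin ∘ₗ LinearMap.fst K _ K ∘ₗ LinearMap.snd K K _)))
    fun i j => by ext <;> simp [hT i j]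

theorem quadraticRep_gen (hT : IsQSymm q T) (i : Fin n) (a t : K) (v : Fin n → K) :
    quadraticRep hT (qaffGen K n q i) (a, v, t) = (0, Pi.single i a, (T *ᵥ v) i) := by
  simp [quadraticRep]

/-- The functional on `O_q(K^n)` that vanishes on `1` and the generators and sends `x_i x_j` to
`T i j`. -/
noncomputable def quadraticPart (hT : IsQSymm q T) : QAff K n q →ₗ[K] K :=
  LinearMap.snd K _ K ∘ₗ LinearMap.snd K K _ ∘ₗ LinearMap.applyₗ (1, 0, 0) ∘ₗ
    (quadraticRep hT).toLinearMap

theorem quadraticPart_apply (hT : IsQSymm q T) (f : QAff K n q) :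
    quadraticPart hT f = (quadraticRep hT f (1, 0, 0)).2.2 :=
  rfl

theorem quadraticRep_apply (hT : IsQSymm q T) (f : QAff K n q) (a t : K) (v : Fin n → K) :
    quadraticRep hT f (a, v, t) =
      (constantCoeff q f * a, constantCoeff q f • v + a • linearPart q f,
        constantCoeff q f * t + linearPart q f ⬝ᵥ T *ᵥ v + a * quadraticPart hT f) := by
  induction f using induction_on generalizing a t v with
  | algebraMap r => simp [quadraticPart_apply, Algebra.algebraMap_eq_smul_one]
  | gen i => simp [quadraticPart_apply, quadraticRep_gen, ← Pi.single_smul]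
  | mul f g hf hg =>
    rw [quadraticPart_apply, map_mul, Module.End.mul_apply, Module.End.mul_apply, hg, hg, hf, hf]
    ext <;> simp [Matrix.mulVec_add, Matrix.mulVec_smul] <;> ring
  | add f g hf hg =>
    rw [map_add, LinearMap.add_apply, hf, hg]
    ext <;> simp <;> ring

theorem quadraticPart_mul (hT : IsQSymm q T) (f g : QAff K n q) :
    quadraticPart hT (f * g) = constantCoeff q f * quadraticPart hT g +
      linearPart q f ⬝ᵥ T *ᵥ (linearPart q g) + constantCoeff q g * quadraticPart hT f := by
  rw [quadraticPart_apply, map_mul, Module.End.mul_apply, quadraticRep_apply hT g,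
    quadraticRep_apply hT f]
  simp

theorem dotProduct_mulVec_linearPart_of_mul_eq_smul_mul (hT : IsQSymm q T) {f g : QAff K n q}
    {c : K} (h : f * g = c • (g * f)) (hf : linearPart q f ≠ 0) (hg : linearPart q g ≠ 0) :
    linearPart q f ⬝ᵥ T *ᵥ (linearPart q g) =
      c * (linearPart q g ⬝ᵥ T *ᵥ (linearPart q f)) := by
  have hquad := congrArg (quadraticPart hT) h
  simp only [quadraticPart_mul, map_smul, smul_eq_mul] at hquad
  by_cases hc : c = 1
  · subst hc
    linear_combination hquad
  · obtain ⟨hf0, hg0⟩ := constantCoeff_eq_zero_of_mul_eq_smul_mul h hc hf hg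
    simpa [hf0, hg0] using hquad

section LinearMatrix

variable {m : ℕ} {r : Fin m → Fin m → Kˣ}

/-- The matrix whose rows are the linear parts of the images of the generators. -/
noncomputable def linearMatrix (φ : QAff K m r →ₐ[K] QAff K n q) : Matrix (Fin m) (Fin n) K :=
  Matrix.of fun i => linearPart q (φ (qaffGen K m r i))

theorem linearPart_map_mem_range_vecMul (φ : QAff K m r →ₐ[K] QAff K n q) (f : QAff K m r) :
    linearPart q (φ f) ∈ LinearMap.range (linearMatrix φ).vecMulLinear := by
  induction f using induction_on with
  | algebraMap c => simp [Algebra.algebraMap_eq_smul_one]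
  | gen i => exact ⟨Pi.single i 1, by simp [linearMatrix]⟩
  | mul f g hf hg =>
    rw [map_mul, linearPart_mul]
    exact add_mem (Submodule.smul_mem _ _ hg) (Submodule.smul_mem _ _ hf)
  | add f g hf hg =>
    rw [map_add, map_add]
    exact add_mem hf hg

theorem congrQSymm_linearMatrix {φ : QAff K m r →ₐ[K] QAff K n q}
    (hφ : ∀ i, linearPart q (φ (qaffGen K m r i)) ≠ 0) : CongrQSymm r q (linearMatrix φ) := by
  intro T hT i j
  rw [mul_mul_transpose_apply, mul_mul_transpose_apply]
  refine dotProduct_mulVec_linearPart_of_mul_eq_smul_mul hT ?_ (hφ i) (hφ j)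
  rw [← map_mul, gen_mul_gen, map_smul, map_mul]

end LinearMatrix

theorem det_linearMatrix_ne_zero {φ : QAff K n p →ₐ[K] QAff K n q} (hφ : Function.Surjective φ) :
    (linearMatrix φ).det ≠ 0 := by
  have hsurj : Function.Surjective (linearMatrix φ).vecMul := fun v => by
    obtain ⟨f, rfl⟩ := (linearPart_surjective.comp hφ) v
    exact linearPart_map_mem_range_vecMul φ f
  exact ((Matrix.isUnit_iff_isUnit_det _).1 (Matrix.vecMul_surjective_iff_isUnit.1 hsurj)).ne_zero

theorem exists_perm_of_surjective (hq1 : ∀ i, q i i = 1) (hq2 : ∀ i j, q i j * q j i = 1)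
    {φ : QAff K n p →ₐ[K] QAff K n q} (hφ : Function.Surjective φ) :
    ∃ σ : Equiv.Perm (Fin n), ∀ i j, p i j = q (σ i) (σ j) := by
  have hdet : (linearMatrix φ).det ≠ 0 := det_linearMatrix_ne_zero hφ
  have hrow : ∀ i, linearPart q (φ (qaffGen K n p i)) ≠ 0 := fun i hi =>
    hdet (Matrix.det_eq_zero_of_row_eq_zero i (congrFun hi))
  exact (congrQSymm_linearMatrix hrow).exists_perm hq1 hq2 hdet

end QAff

theorem qAff_iso_iff_general {K : Type*} [Field K] {n : ℕ} (p : Fin n → Fin n → Kˣ)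
    {q : Fin n → Fin n → Kˣ} (hq1 : ∀ i, q i i = 1) (hq2 : ∀ i j, q i j * q j i = 1) :
    [Nonempty (QAff K n p ≃ₐ[K] QAff K n q),
      ∃ φ : QAff K n p →ₐ[K] QAff K n q, Function.Surjective φ,
      ∃ σ : Equiv.Perm (Fin n), ∀ i j, p i j = q (σ i) (σ j)].TFAE := by
  tfae_have 1 → 2 := fun ⟨e⟩ => ⟨e, e.surjective⟩
  tfae_have 2 → 3 := fun ⟨_, hφ⟩ => QAff.exists_perm_of_surjective hq1 hq2 hφ
  tfae_have 3 → 1 := fun ⟨σ, hσ⟩ => ⟨QAff.reindex σ hσ⟩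
  tfae_finish

/-- for multiplicatively antisymmetric `p, q`,
`O_p(K^n) ≅ O_q(K^n)` iff `p` is a permutation of `q`. -/
theorem qAff_iso_iff (K : Type*) [Field K] (n : ℕ) (hn : 1 ≤ n)
    (p q : Fin n → Fin n → Kˣ)
    (hp1 : ∀ i, p i i = 1) (hp2 : ∀ i j, p i j * p j i = 1)
    (hq1 : ∀ i, q i i = 1) (hq2 : ∀ i j, q i j * q j i = 1) :
    Nonempty (QAff K n p ≃ₐ[K] QAff K n q) ↔
      ∃ σ : Equiv.Perm (Fin n), ∀ i j, p i j = q (σ i) (σ j) :=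
  (qAff_iso_iff_general p hq1 hq2).out 0 2
end

section
/- Let K be a field and p, q ∈ Kˣ. The quantum planes O_p(K²) and O_q(K²) are isomorphic as K-algebras if and only if p = q or p = q⁻¹. -/
/-- The defining relation of the quantum plane `O_p(K²)`:
`x₁x₂ = p·x₂x₁`. -/
inductive QPlaneRel (K : Type*) [Field K] (p : K) :
    FreeAlgebra K (Fin 2) → FreeAlgebra K (Fin 2) → Prop
  | rel : QPlaneRel K p (FreeAlgebra.ι K 0 * FreeAlgebra.ι K 1)
      (p • (FreeAlgebra.ι K 1 * FreeAlgebra.ι K 0))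

/-- The quantum plane `O_p(K²)`. -/
abbrev QPlane (K : Type*) [Field K] (p : K) := RingQuot (QPlaneRel K p)

/-!
Given an isomorphism `e : O_p(K²) ≃ O_q(K²)`, consider the constant and linear parts of the `e xᵢ`,
that is, their images modulo the square of the augmentation ideal. The linear parts form a basis of
`K²`, since `e` is surjective; if `p ≠ 1`, the defining relation of `O_p(K²)` then forces the
constant parts to vanish.

For `s 0 * s' 1 = q * (s 1 * s' 0)`, the algebra `O_q(K²)` has a representation by upper triangular
3 × 3 matrices in which `xᵢ` has superdiagonal `(s i, s' i)`. The top right corner of the relation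
between `e x₁` and `e x₂` in this representation shows that the invertible matrix formed by their
linear parts carries every such pair `(s, s')` to one satisfying the same condition for `p`. This is
possible only if `p = q` or `p * q = 1`. If `p = 1 ≠ q`, apply the same argument to `e⁻¹`.
-/

open TrivSqZeroExt

open scoped Matrix

namespace QPlane

variable {K : Type*} [Field K] {p q : K}

/-- The `i`-th generator of the quantum plane; the indices `0, 1` stand for the paper's `1, 2`. -/
noncomputable def gen (p : K) (i : Fin 2) : QPlane K p :=
  RingQuot.mkAlgHom K (QPlaneRel K p) (FreeAlgebra.ι K i)

theorem gen_zero_mul_gen_one (p : K) : gen p 0 * gen p 1 = p • (gen p 1 * gen p 0) := by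
  simpa only [gen, map_mul, map_smul] using
    RingQuot.mkAlgHom_rel K (QPlaneRel.rel (K := K) (p := p))

@[elab_as_elim]
theorem induction {motive : QPlane K p → Prop}
    (algebraMap : ∀ r, motive (algebraMap K (QPlane K p) r)) (gen : ∀ i, motive (gen p i))
    (mul : ∀ u v, motive u → motive v → motive (u * v))
    (add : ∀ u v, motive u → motive v → motive (u + v)) (u : QPlane K p) : motive u := by
  obtain ⟨u, rfl⟩ := RingQuot.mkAlgHom_surjective K (QPlaneRel K p) u
  induction u using FreeAlgebra.induction with
  | grade0 r => simpa only [AlgHom.commutes] using algebraMap r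
  | grade1 i => exact gen i
  | mul u v hu hv => simpa only [map_mul] using mul _ _ hu hv
  | add u v hu hv => simpa only [map_add] using add _ _ hu hv

section Lift

variable {A : Type*} [Ring A] [Algebra K A]

/-- The universal property of the quantum plane: a pair of elements of an algebra that satisfies the
defining relation determines a homomorphism. -/
noncomputable def lift (f : Fin 2 → A) (hf : f 0 * f 1 = p • (f 1 * f 0)) : QPlane K p →ₐ[K] A :=
  RingQuot.liftAlgHom K ⟨FreeAlgebra.lift K f, by
    rintro _ _ ⟨⟩
    simpa only [map_mul, map_smul, FreeAlgebra.lift_ι_apply] using hf⟩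

@[simp]
theorem lift_gen (f : Fin 2 → A) (hf : f 0 * f 1 = p • (f 1 * f 0)) (i : Fin 2) :
    lift f hf (gen p i) = f i := by
  simp [lift, gen]

theorem algHom_ext {f g : QPlane K p →ₐ[K] A} (h : ∀ i, f (gen p i) = g (gen p i)) : f = g :=
  RingQuot.ringQuot_ext' _ _ _ (FreeAlgebra.hom_ext (funext h))

end Lift

/-- The homomorphism between quantum planes with mutually inverse parameters that exchanges the
generators. -/
noncomputable def swap (h : p * q = 1) : QPlane K p →ₐ[K] QPlane K q :=
  lift ![gen q 1, gen q 0] (by simp [gen_zero_mul_gen_one, smul_smul, h])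

theorem swap_comp_swap (h : p * q = 1) (h' : q * p = 1) :
    (swap h).comp (swap h') = AlgHom.id K (QPlane K q) := by
  refine algHom_ext fun i => ?_
  fin_cases i <;> simp [swap]

/-- The isomorphism between quantum planes with mutually inverse parameters that exchanges the
generators. -/
noncomputable def swapEquiv (h : p * q = 1) : QPlane K p ≃ₐ[K] QPlane K q :=
  have h' : q * p = 1 := mul_comm p q ▸ h
  AlgEquiv.ofAlgHom (swap h) (swap h') (swap_comp_swap h h') (swap_comp_swap h' h)

section FirstOrder

variable {V : Type*} [AddCommGroup V] [Module K V] [Module Kᵐᵒᵖ V] [IsCentralScalar K V]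

theorem snd_apply_mem_span (φ : QPlane K p →ₐ[K] TrivSqZeroExt K V) (u : QPlane K p) :
    (φ u).snd ∈ Submodule.span K (Set.range fun i => (φ (gen p i)).snd) := by
  induction u using induction with
  | algebraMap r => simp [algebraMap_eq_inl]
  | gen i => exact Submodule.subset_span ⟨i, rfl⟩
  | mul u v hu hv =>
    rw [map_mul, snd_mul, op_smul_eq_smul]
    exact add_mem (Submodule.smul_mem _ _ hv) (Submodule.smul_mem _ _ hu)
  | add u v hu hv =>
    rw [map_add, snd_add]
    exact add_mem hu hv

theorem linearIndependent_snd_of_surjective (hV : Module.finrank K V = 2)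
    {φ : QPlane K p →ₐ[K] TrivSqZeroExt K V} (hφ : Function.Surjective φ) :
    LinearIndependent K fun i => (φ (gen p i)).snd := by
  refine linearIndependent_of_top_le_span_of_card_eq_finrank (fun v _ => ?_) (by simp [hV])
  obtain ⟨u, hu⟩ := hφ (inr v)
  simpa only [hu, snd_inr] using snd_apply_mem_span φ u

theorem fst_apply_gen_eq_zero (hp : p ≠ 1) {φ : QPlane K p →ₐ[K] TrivSqZeroExt K V}
    (hφ : LinearIndependent K fun i => (φ (gen p i)).snd) (i : Fin 2) :
    (φ (gen p i)).fst = 0 := by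
  set c := fun i => (φ (gen p i)).fst
  set v := fun i => (φ (gen p i)).snd
  have relation : c 0 • v 1 + c 1 • v 0 = p • (c 1 • v 0 + c 0 • v 1) := by
    have := congrArg (fun u => (φ u).snd) (gen_zero_mul_gen_one p)
    simpa only [map_mul, map_smul, snd_mul, snd_smul, op_smul_eq_smul] using this
  have dependence : ((1 - p) * c 1) • v 0 + ((1 - p) * c 0) • v 1 = 0 := by
    linear_combination (norm := module) relation
  have hp' : 1 - p ≠ 0 := sub_ne_zero.mpr hp.symm
  obtain ⟨h₁, h₀⟩ :=
    LinearIndependent.pair_iff.mp ((FinVec.etaExpand_eq v).symm ▸ hφ) _ _ dependence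
  fin_cases i
  · exact (mul_eq_zero.mp h₀).resolve_left hp'
  · exact (mul_eq_zero.mp h₁).resolve_left hp'

/-- The constant and linear parts of an element of the quantum plane, that is, its reduction modulo
the square of the augmentation ideal. -/
noncomputable def linearization (q : K) : QPlane K q →ₐ[K] TrivSqZeroExt K (Fin 2 → K) :=
  lift (fun i => inr (Pi.single i 1)) (by simp only [inr_mul_inr, smul_zero])

theorem linearization_surjective (q : K) : Function.Surjective (linearization q) := by
  intro z
  refine ⟨algebraMap K _ z.fst + z.snd 0 • gen q 0 + z.snd 1 • gen q 1, ?_⟩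
  ext i
  · simp [linearization, algebraMap_eq_inl]
  · fin_cases i <;> simp [linearization, algebraMap_eq_inl]

end FirstOrder

/-- The upper triangular 3 × 3 matrix with constant diagonal `a`, superdiagonal `(b, c)` and top
right corner `d`. -/
def triangularMatrix (a b c d : K) : Matrix (Fin 3) (Fin 3) K := !![a, b, d; 0, a, c; 0, 0, a]

theorem triangularMatrix_mul (a b c d a' b' c' d' : K) :
    triangularMatrix a b c d * triangularMatrix a' b' c' d' =
      triangularMatrix (a * a') (a * b' + a' * b) (a * c' + a' * c)
        (a * d' + b * c' + d * a') := by
  ext i j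
  fin_cases i <;> fin_cases j <;>
    simp [triangularMatrix, Matrix.mul_apply, Fin.sum_univ_three, mul_comm a']

theorem triangularMatrix_add (a b c d a' b' c' d' : K) :
    triangularMatrix a b c d + triangularMatrix a' b' c' d' =
      triangularMatrix (a + a') (b + b') (c + c') (d + d') := by
  simp [triangularMatrix]

theorem smul_triangularMatrix (r a b c d : K) :
    r • triangularMatrix a b c d = triangularMatrix (r * a) (r * b) (r * c) (r * d) := by
  simp [triangularMatrix]

theorem algebraMap_eq_triangularMatrix (r : K) :
    algebraMap K (Matrix (Fin 3) (Fin 3) K) r = triangularMatrix r 0 0 0 := by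
  ext i j
  fin_cases i <;> fin_cases j <;> simp [triangularMatrix, Matrix.algebraMap_matrix_apply]

/-- The representation of the quantum plane in which the `i`-th generator acts by the strictly upper
triangular matrix with superdiagonal `(s i, s' i)` and corner `0`. -/
noncomputable def triangularRep (s s' : Fin 2 → K) (h : s 0 * s' 1 = q * (s 1 * s' 0)) :
    QPlane K q →ₐ[K] Matrix (Fin 3) (Fin 3) K :=
  lift (fun i => triangularMatrix 0 (s i) (s' i) 0)
    (by simp [triangularMatrix_mul, smul_triangularMatrix, h])

theorem exists_triangularRep_apply_eq {s s' : Fin 2 → K} (h : s 0 * s' 1 = q * (s 1 * s' 0))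
    (u : QPlane K q) :
    ∃ d, triangularRep s s' h u = triangularMatrix (linearization q u).fst
      ((linearization q u).snd ⬝ᵥ s) ((linearization q u).snd ⬝ᵥ s') d := by
  induction u using induction with
  | algebraMap r =>
    exact ⟨0, by simp [algebraMap_eq_triangularMatrix, algebraMap_eq_inl]⟩
  | gen i => exact ⟨0, by simp [triangularRep, linearization]⟩
  | mul u v hu hv =>
    obtain ⟨d, hd⟩ := hu
    obtain ⟨d', hd'⟩ := hv
    simp only [map_mul, hd, hd', triangularMatrix_mul, fst_mul, snd_mul, op_smul_eq_smul,
      add_dotProduct, smul_dotProduct, smul_eq_mul]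
    exact ⟨_, rfl⟩
  | add u v hu hv =>
    obtain ⟨d, hd⟩ := hu
    obtain ⟨d', hd'⟩ := hv
    simp only [map_add, hd, hd', triangularMatrix_add, fst_add, snd_add, add_dotProduct]
    exact ⟨_, rfl⟩

theorem dotProduct_mul_dotProduct_eq {u v : QPlane K q} (huv : u * v = p • (v * u))
    (hu : (linearization q u).fst = 0) (hv : (linearization q v).fst = 0)
    {s s' : Fin 2 → K} (h : s 0 * s' 1 = q * (s 1 * s' 0)) :
    ((linearization q u).snd ⬝ᵥ s) * ((linearization q v).snd ⬝ᵥ s') =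
      p * (((linearization q v).snd ⬝ᵥ s) * ((linearization q u).snd ⬝ᵥ s')) := by
  obtain ⟨d, hd⟩ := exists_triangularRep_apply_eq h u
  obtain ⟨d', hd'⟩ := exists_triangularRep_apply_eq h v
  have corner := congrArg (fun w => triangularRep s s' h w 0 2) huv
  simpa [hd, hd', hu, hv, triangularMatrix_mul, smul_triangularMatrix, triangularMatrix]
    using corner

theorem eq_or_mul_eq_one_of_mulVec {M : Matrix (Fin 2) (Fin 2) K} (hM : M.det ≠ 0)
    (h : ∀ s s' : Fin 2 → K, s 0 * s' 1 = q * (s 1 * s' 0) →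
      (M *ᵥ s) 0 * (M *ᵥ s') 1 = p * ((M *ᵥ s) 1 * (M *ᵥ s') 0)) :
    p = q ∨ p * q = 1 := by
  have h₀ : M 0 0 * M 1 0 = p * (M 1 0 * M 0 0) := by
    simpa [Matrix.mulVec, dotProduct] using h ![1, 0] ![1, 0]
  have h₁ : M 0 1 * M 1 1 = p * (M 1 1 * M 0 1) := by
    simpa [Matrix.mulVec, dotProduct] using h ![0, 1] ![0, 1]
  have mixed : (p - q) * (M 0 0 * M 1 1) = (1 - p * q) * (M 0 1 * M 1 0) := by
    have h₂ := h ![1, 1] ![1, q] (by simp)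
    simp only [Matrix.mulVec, dotProduct, Fin.sum_univ_two, Matrix.cons_val_zero,
      Matrix.cons_val_one] at h₂
    linear_combination h₀ + q * h₁ - h₂
  rw [Matrix.det_fin_two] at hM
  have vanishing : (p - 1) * (M 0 0 * M 1 0) = 0 := by linear_combination -h₀
  simp only [mul_eq_zero, sub_eq_zero] at vanishing
  rcases vanishing with rfl | h₀₀ | h₁₀
  · left
    have : (1 - q) * (M 0 0 * M 1 1 - M 0 1 * M 1 0) = 0 := by linear_combination mixed
    exact sub_eq_zero.mp ((mul_eq_zero.mp this).resolve_right hM)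
  · right
    rw [h₀₀, zero_mul, zero_sub, neg_ne_zero] at hM
    rw [h₀₀, zero_mul, mul_zero, zero_eq_mul] at mixed
    exact (sub_eq_zero.mp (mixed.resolve_right hM)).symm
  · left
    rw [h₁₀, mul_zero, sub_zero] at hM
    rw [h₁₀, mul_zero, mul_zero, mul_eq_zero] at mixed
    exact sub_eq_zero.mp (mixed.resolve_right hM)

theorem eq_or_mul_eq_one_of_algEquiv (hp : p ≠ 1) (e : QPlane K p ≃ₐ[K] QPlane K q) :
    p = q ∨ p * q = 1 := by
  let φ : QPlane K p →ₐ[K] TrivSqZeroExt K (Fin 2 → K) := (linearization q).comp e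
  have hφ : LinearIndependent K fun i => (φ (gen p i)).snd :=
    linearIndependent_snd_of_surjective (by simp)
      ((linearization_surjective q).comp e.surjective)
  let M : Matrix (Fin 2) (Fin 2) K := Matrix.of fun i => (φ (gen p i)).snd
  have hM : M.det ≠ 0 := by
    rwa [← isUnit_iff_ne_zero, ← Matrix.isUnit_iff_isUnit_det,
      ← Matrix.linearIndependent_rows_iff_isUnit]
  have relation : e (gen p 0) * e (gen p 1) = p • (e (gen p 1) * e (gen p 0)) := by
    simp only [← map_mul, ← map_smul, gen_zero_mul_gen_one]
  exact eq_or_mul_eq_one_of_mulVec hM fun s s' h => dotProduct_mul_dotProduct_eq relation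
    (fst_apply_gen_eq_zero hp hφ 0) (fst_apply_gen_eq_zero hp hφ 1) h

end QPlane

theorem qPlane_iso_iff_general (K : Type*) [Field K] (p q : K) :
    Nonempty (QPlane K p ≃ₐ[K] QPlane K q) ↔ (p = q ∨ p * q = 1) := by
  constructor
  · rintro ⟨e⟩
    by_cases hp : p = 1
    · by_cases hq : q = 1
      · exact Or.inl (hp.trans hq.symm)
      · exact (QPlane.eq_or_mul_eq_one_of_algEquiv hq e.symm).imp Eq.symm
          fun h => mul_comm p q ▸ h
    · exact QPlane.eq_or_mul_eq_one_of_algEquiv hp e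
  · rintro (rfl | h)
    · exact ⟨AlgEquiv.refl⟩
    · exact ⟨QPlane.swapEquiv h⟩

/-- `O_p(K²) ≅ O_q(K²)` iff `p = q` or `p = q⁻¹`. -/
theorem qPlane_iso_iff (K : Type*) [Field K] (p q : Kˣ) :
    Nonempty (QPlane K (p : K) ≃ₐ[K] QPlane K (q : K)) ↔ (p = q ∨ p = q⁻¹) := by
  rw [qPlane_iso_iff_general, Units.val_inj, eq_inv_iff_mul_eq_one, ← Units.val_inj (a := p * q),
    Units.val_mul, Units.val_one]
end

section
/- Let K be a field and λ, q ∈ Kˣ. Then R(q⁻¹, λ⁻¹q, λ⁻¹q², 1) is isomorphic as a K-algebra to the multi-parameter quantum matrix algebra O_{λ,q}(M_2(K)); an isomorphism is given by x₁ ↦ λq⁻¹·X₁₂, x₂ ↦ X₂₂, x₃ ↦ X₂₁, x₄ ↦ X₁₁. -/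
/-- The defining relations of Jordan's ambiskew polynomial ring `R(a,b,p₁,p₂)`,
with generators `x₁ = ι 0`, `x₂ = ι 1`, `x₃ = ι 2`, `x₄ = ι 3`:
`x₄x₁ = a·x₁x₄`, `x₂x₁ = p₁⁻¹a⁻¹·x₁x₂`, `x₁x₃ = p₁·x₃x₁`, `x₄x₃ = b·x₃x₄`,
`x₂x₃ = p₁b⁻¹·x₃x₂`, `x₂x₄ = p₂·x₄x₂ + (1 - p₂ab)·x₁x₃`. -/
inductive AmbRel (K : Type*) [Field K] (a b p₁ p₂ : K) :
    FreeAlgebra K (Fin 4) → FreeAlgebra K (Fin 4) → Prop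
  | r41 : AmbRel K a b p₁ p₂ (FreeAlgebra.ι K 3 * FreeAlgebra.ι K 0)
      (a • (FreeAlgebra.ι K 0 * FreeAlgebra.ι K 3))
  | r21 : AmbRel K a b p₁ p₂ (FreeAlgebra.ι K 1 * FreeAlgebra.ι K 0)
      ((p₁⁻¹ * a⁻¹) • (FreeAlgebra.ι K 0 * FreeAlgebra.ι K 1))
  | r13 : AmbRel K a b p₁ p₂ (FreeAlgebra.ι K 0 * FreeAlgebra.ι K 2)
      (p₁ • (FreeAlgebra.ι K 2 * FreeAlgebra.ι K 0))
  | r43 : AmbRel K a b p₁ p₂ (FreeAlgebra.ι K 3 * FreeAlgebra.ι K 2)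
      (b • (FreeAlgebra.ι K 2 * FreeAlgebra.ι K 3))
  | r23 : AmbRel K a b p₁ p₂ (FreeAlgebra.ι K 1 * FreeAlgebra.ι K 2)
      ((p₁ * b⁻¹) • (FreeAlgebra.ι K 2 * FreeAlgebra.ι K 1))
  | r24 : AmbRel K a b p₁ p₂ (FreeAlgebra.ι K 1 * FreeAlgebra.ι K 3)
      (p₂ • (FreeAlgebra.ι K 3 * FreeAlgebra.ι K 1) +
        (1 - p₂ * a * b) • (FreeAlgebra.ι K 0 * FreeAlgebra.ι K 2))

/-- Jordan's ambiskew polynomial ring `R(a,b,p₁,p₂)`. -/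
abbrev Ambiskew (K : Type*) [Field K] (a b p₁ p₂ : K) := RingQuot (AmbRel K a b p₁ p₂)

/-- The images of the four free generators in `R(a,b,p₁,p₂)`;
`agen K a b p₁ p₂ i` is the generator `x_{i+1}`. -/
noncomputable def agen (K : Type*) [Field K] (a b p₁ p₂ : K) (i : Fin 4) :
    Ambiskew K a b p₁ p₂ :=
  RingQuot.mkAlgHom K (AmbRel K a b p₁ p₂) (FreeAlgebra.ι K i)

/-- The defining relations of the multi-parameter quantum matrix algebra
`O_{λ,q}(M₂(K))`, with generators `X₁₁ = ι 0`, `X₁₂ = ι 1`, `X₂₁ = ι 2`,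
`X₂₂ = ι 3`:
`X₁₂X₁₁ = q·X₁₁X₁₂`, `X₂₂X₂₁ = q·X₂₁X₂₂`, `X₂₁X₁₁ = λq⁻¹·X₁₁X₂₁`,
`X₂₂X₁₂ = λq⁻¹·X₁₂X₂₂`, `X₂₁X₁₂ = λq⁻²·X₁₂X₂₁`,
`X₂₂X₁₁ = X₁₁X₂₂ + (λ-1)q⁻¹·X₁₂X₂₁`. -/
inductive MultiQMatRel (K : Type*) [Field K] (lam q : K) :
    FreeAlgebra K (Fin 4) → FreeAlgebra K (Fin 4) → Prop
  | r1 : MultiQMatRel K lam q (FreeAlgebra.ι K 1 * FreeAlgebra.ι K 0)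
      (q • (FreeAlgebra.ι K 0 * FreeAlgebra.ι K 1))
  | r2 : MultiQMatRel K lam q (FreeAlgebra.ι K 3 * FreeAlgebra.ι K 2)
      (q • (FreeAlgebra.ι K 2 * FreeAlgebra.ι K 3))
  | r3 : MultiQMatRel K lam q (FreeAlgebra.ι K 2 * FreeAlgebra.ι K 0)
      ((lam * q⁻¹) • (FreeAlgebra.ι K 0 * FreeAlgebra.ι K 2))
  | r4 : MultiQMatRel K lam q (FreeAlgebra.ι K 3 * FreeAlgebra.ι K 1)
      ((lam * q⁻¹) • (FreeAlgebra.ι K 1 * FreeAlgebra.ι K 3))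
  | r5 : MultiQMatRel K lam q (FreeAlgebra.ι K 2 * FreeAlgebra.ι K 1)
      ((lam * (q ^ 2)⁻¹) • (FreeAlgebra.ι K 1 * FreeAlgebra.ι K 2))
  | r6 : MultiQMatRel K lam q (FreeAlgebra.ι K 3 * FreeAlgebra.ι K 0)
      (FreeAlgebra.ι K 0 * FreeAlgebra.ι K 3 +
        ((lam - 1) * q⁻¹) • (FreeAlgebra.ι K 1 * FreeAlgebra.ι K 2))

/-- The multi-parameter quantum matrix algebra `O_{λ,q}(M₂(K))`. -/
abbrev MultiQMat (K : Type*) [Field K] (lam q : K) := RingQuot (MultiQMatRel K lam q)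

/-- The images of the generators in `O_{λ,q}(M₂(K))`: `mgen K lam q 0 = X₁₁`,
`mgen K lam q 1 = X₁₂`, `mgen K lam q 2 = X₂₁`, `mgen K lam q 3 = X₂₂`. -/
noncomputable def mgen (K : Type*) [Field K] (lam q : K) (i : Fin 4) : MultiQMat K lam q :=
  RingQuot.mkAlgHom K (MultiQMatRel K lam q) (FreeAlgebra.ι K i)

/-!
A homomorphism out of an algebra given by generators and relations is a family satisfying the
relations, so it is enough to match families: in every `K`-algebra, `(X₁₁, X₁₂, X₂₁, X₂₂)` satisfies
the relations of `O_{λ,q}(M₂(K))` if and only if `(λq⁻¹·X₁₂, X₂₂, X₂₁, X₁₁)` satisfies those of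
`R(q⁻¹, λ⁻¹q, λ⁻¹q², 1)`. Five of the six relations on each side say that two generators commute up
to a scalar, a condition that ignores nonzero rescaling of the generators, and the factor `λq⁻¹`
turns the coefficient `1 - λ⁻¹` of the sixth relation into `(λ - 1)q⁻¹`.
-/

section Presentation

variable {K X Y A : Type*} [CommSemiring K] [Semiring A] [Algebra K A]

/-- The family `x` of elements of `A` satisfies the relations `r` between noncommutative
polynomials: it is an `A`-valued point of the algebra presented by `r`. -/
def SatisfiesRelations (r : FreeAlgebra K X → FreeAlgebra K X → Prop) (x : X → A) : Prop :=
  ∀ ⦃f g⦄, r f g → FreeAlgebra.lift K x f = FreeAlgebra.lift K x g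

/-- The canonical generators of the algebra presented by `r`, i.e. its universal point. -/
noncomputable def presentedGen (r : FreeAlgebra K X → FreeAlgebra K X → Prop) (i : X) :
    RingQuot r :=
  RingQuot.mkAlgHom K r (FreeAlgebra.ι K i)

theorem satisfiesRelations_presentedGen (r : FreeAlgebra K X → FreeAlgebra K X → Prop) :
    SatisfiesRelations r (presentedGen r) := by
  intro f g hfg
  have lift_gen : FreeAlgebra.lift K (presentedGen r) = RingQuot.mkAlgHom K r := by
    ext i
    exact FreeAlgebra.lift_ι_apply _ i
  rw [lift_gen, RingQuot.mkAlgHom_rel K hfg]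

variable {r : FreeAlgebra K X → FreeAlgebra K X → Prop}
  {s : FreeAlgebra K Y → FreeAlgebra K Y → Prop}

namespace SatisfiesRelations

/-- The universal property of the algebra presented by `r`: a family satisfying the relations
extends to an algebra homomorphism. -/
noncomputable def lift {x : X → A} (hx : SatisfiesRelations r x) : RingQuot r →ₐ[K] A :=
  RingQuot.liftAlgHom K ⟨FreeAlgebra.lift K x, hx⟩

theorem lift_presentedGen {x : X → A} (hx : SatisfiesRelations r x) (i : X) :
    hx.lift (presentedGen r i) = x i :=
  (RingQuot.liftAlgHom_mkAlgHom_apply K (FreeAlgebra.lift K x) hx (FreeAlgebra.ι K i)).trans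
    (FreeAlgebra.lift_ι_apply x i)

theorem lift_comp_presentedGen {x : X → A} (hx : SatisfiesRelations r x) :
    hx.lift ∘ presentedGen r = x :=
  funext hx.lift_presentedGen

end SatisfiesRelations

theorem presented_algHom_ext {φ ψ : RingQuot r →ₐ[K] A}
    (h : φ ∘ presentedGen r = ψ ∘ presentedGen r) : φ = ψ := by
  ext i
  exact congrFun h i

/-- The isomorphism of presented algebras given by expressing the generators of each in terms of
those of the other, by mutually inverse substitutions `x` and `y`. -/
noncomputable def presentedAlgEquiv {x : X → RingQuot s} {y : Y → RingQuot r}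
    (hx : SatisfiesRelations r x) (hy : SatisfiesRelations s y)
    (hyx : hy.lift ∘ x = presentedGen r) (hxy : hx.lift ∘ y = presentedGen s) :
    RingQuot r ≃ₐ[K] RingQuot s :=
  AlgEquiv.ofAlgHom hx.lift hy.lift
    (presented_algHom_ext <| by
      rw [AlgHom.coe_comp, Function.comp_assoc, hy.lift_comp_presentedGen, hxy, AlgHom.coe_id,
        Function.id_comp])
    (presented_algHom_ext <| by
      rw [AlgHom.coe_comp, Function.comp_assoc, hx.lift_comp_presentedGen, hyx, AlgHom.coe_id,
        Function.id_comp])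

theorem presentedAlgEquiv_presentedGen {x : X → RingQuot s} {y : Y → RingQuot r}
    (hx : SatisfiesRelations r x) (hy : SatisfiesRelations s y)
    (hyx : hy.lift ∘ x = presentedGen r) (hxy : hx.lift ∘ y = presentedGen s) (i : X) :
    presentedAlgEquiv hx hy hyx hxy (presentedGen r i) = x i :=
  hx.lift_presentedGen i

end Presentation

/-- `u` and `v` commute up to the scalar `c`, in the order `uv = c·vu`. -/
def QCommute {K A : Type*} [SMul K A] [Mul A] (c : K) (u v : A) : Prop :=
  u * v = c • (v * u)

namespace QCommute

variable {K A : Type*} [Semifield K] [Semiring A] [Algebra K A] {c d : K} {u v : A}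

theorem inv_iff (hc : c ≠ 0) : QCommute c⁻¹ u v ↔ QCommute c v u := by
  rw [QCommute, QCommute, eq_inv_smul_iff₀ hc, eq_comm]

theorem smul_left_iff (hd : d ≠ 0) : QCommute c (d • u) v ↔ QCommute c u v := by
  rw [QCommute, QCommute, smul_mul_assoc, mul_smul_comm, smul_comm c d]
  exact (IsUnit.mk0 d hd).smul_left_cancel

theorem smul_right_iff (hd : d ≠ 0) : QCommute c u (d • v) ↔ QCommute c u v := by
  rw [QCommute, QCommute, smul_mul_assoc, mul_smul_comm, smul_comm c d]
  exact (IsUnit.mk0 d hd).smul_left_cancel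

end QCommute

section Relations

variable {K A : Type*} [Field K] [Semiring A] [Algebra K A]

theorem satisfiesRelations_ambRel_iff {a b p₁ p₂ : K} {x : Fin 4 → A} :
    SatisfiesRelations (AmbRel K a b p₁ p₂) x ↔
      QCommute a (x 3) (x 0) ∧ QCommute (p₁⁻¹ * a⁻¹) (x 1) (x 0) ∧ QCommute p₁ (x 0) (x 2) ∧
      QCommute b (x 3) (x 2) ∧ QCommute (p₁ * b⁻¹) (x 1) (x 2) ∧
      x 1 * x 3 = p₂ • (x 3 * x 1) + (1 - p₂ * a * b) • (x 0 * x 2) := by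
  simp only [QCommute]
  constructor
  · intro h
    have relations := And.intro (h .r41) <| And.intro (h .r21) <| And.intro (h .r13) <|
      And.intro (h .r43) <| And.intro (h .r23) (h .r24)
    simpa only [map_mul, map_add, map_smul, FreeAlgebra.lift_ι_apply] using relations
  · rintro ⟨h41, h21, h13, h43, h23, h24⟩ f g (_ | _) <;>
      simpa only [map_mul, map_add, map_smul, FreeAlgebra.lift_ι_apply]

theorem satisfiesRelations_multiQMatRel_iff {lam q : K} {X : Fin 4 → A} :
    SatisfiesRelations (MultiQMatRel K lam q) X ↔
      QCommute q (X 1) (X 0) ∧ QCommute q (X 3) (X 2) ∧ QCommute (lam * q⁻¹) (X 2) (X 0) ∧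
      QCommute (lam * q⁻¹) (X 3) (X 1) ∧ QCommute (lam * (q ^ 2)⁻¹) (X 2) (X 1) ∧
      X 3 * X 0 = X 0 * X 3 + ((lam - 1) * q⁻¹) • (X 1 * X 2) := by
  simp only [QCommute]
  constructor
  · intro h
    have relations := And.intro (h .r1) <| And.intro (h .r2) <| And.intro (h .r3) <|
      And.intro (h .r4) <| And.intro (h .r5) (h .r6)
    simpa only [map_mul, map_add, map_smul, FreeAlgebra.lift_ι_apply] using relations
  · rintro ⟨h1, h2, h3, h4, h5, h6⟩ f g (_ | _) <;>
      simpa only [map_mul, map_add, map_smul, FreeAlgebra.lift_ι_apply]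

end Relations

section ChangeOfGenerators

/-- The substitution `x₁ = c·X₁₂`, `x₂ = X₂₂`, `x₃ = X₂₁`, `x₄ = X₁₁`; here `X` lists
`X₁₁, X₁₂, X₂₁, X₂₂`. -/
def toAmbiskew {K A : Type*} [SMul K A] (c : K) (X : Fin 4 → A) : Fin 4 → A :=
  ![c • X 1, X 3, X 2, X 0]

/-- The substitution `X₁₁ = x₄`, `X₁₂ = c⁻¹·x₁`, `X₂₁ = x₃`, `X₂₂ = x₂` inverse to
`toAmbiskew c`. -/
def toQMat {K A : Type*} [Inv K] [SMul K A] (c : K) (x : Fin 4 → A) : Fin 4 → A :=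
  ![x 3, c⁻¹ • x 0, x 2, x 1]

theorem toAmbiskew_toQMat {K A : Type*} [GroupWithZero K] [MulAction K A] {c : K} (hc : c ≠ 0)
    (x : Fin 4 → A) : toAmbiskew c (toQMat c x) = x := by
  ext i
  fin_cases i <;> simp [toAmbiskew, toQMat, hc]

theorem toQMat_toAmbiskew {K A : Type*} [GroupWithZero K] [MulAction K A] {c : K} (hc : c ≠ 0)
    (X : Fin 4 → A) : toQMat c (toAmbiskew c X) = X := by
  ext i
  fin_cases i <;> simp [toAmbiskew, toQMat, hc]

theorem comp_toAmbiskew {F K A B : Type*} [SMul K A] [SMul K B] [FunLike F A B]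
    [MulActionHomClass F K A B] (φ : F) (c : K) (X : Fin 4 → A) :
    φ ∘ toAmbiskew c X = toAmbiskew c (φ ∘ X) := by
  ext i
  fin_cases i <;> simp [toAmbiskew]

theorem comp_toQMat {F K A B : Type*} [Inv K] [SMul K A] [SMul K B] [FunLike F A B]
    [MulActionHomClass F K A B] (φ : F) (c : K) (x : Fin 4 → A) :
    φ ∘ toQMat c x = toQMat c (φ ∘ x) := by
  ext i
  fin_cases i <;> simp [toQMat]

variable {K A : Type*} [Field K] [Semiring A] [Algebra K A] {lam q : K}

theorem satisfiesRelations_toAmbiskew_iff (hlam : lam ≠ 0) (hq : q ≠ 0) {X : Fin 4 → A} :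
    SatisfiesRelations (AmbRel K q⁻¹ (lam⁻¹ * q) (lam⁻¹ * q ^ 2) 1)
        (toAmbiskew (lam * q⁻¹) X) ↔
      SatisfiesRelations (MultiQMatRel K lam q) X := by
  have hc : lam * q⁻¹ ≠ 0 := mul_ne_zero hlam (inv_ne_zero hq)
  have hc₂ : lam * (q ^ 2)⁻¹ ≠ 0 := mul_ne_zero hlam (inv_ne_zero (pow_ne_zero 2 hq))
  have coeff21 : (lam⁻¹ * q ^ 2)⁻¹ * q⁻¹⁻¹ = lam * q⁻¹ := by field_simp
  have coeff13 : lam⁻¹ * q ^ 2 = (lam * (q ^ 2)⁻¹)⁻¹ := by field_simp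
  have coeff43 : lam⁻¹ * q = (lam * q⁻¹)⁻¹ := by field_simp
  have coeff23 : lam⁻¹ * q ^ 2 * (lam⁻¹ * q)⁻¹ = q := by field_simp
  have coeff24 : (1 - 1 * q⁻¹ * (lam⁻¹ * q)) * (lam * q⁻¹) = (lam - 1) * q⁻¹ := by field_simp
  have rel41 : QCommute q⁻¹ (X 0) ((lam * q⁻¹) • X 1) ↔ QCommute q (X 1) (X 0) := by
    rw [QCommute.smul_right_iff hc, QCommute.inv_iff hq]
  have rel21 : QCommute ((lam⁻¹ * q ^ 2)⁻¹ * q⁻¹⁻¹) (X 3) ((lam * q⁻¹) • X 1) ↔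
      QCommute (lam * q⁻¹) (X 3) (X 1) := by
    rw [QCommute.smul_right_iff hc, coeff21]
  have rel13 : QCommute (lam⁻¹ * q ^ 2) ((lam * q⁻¹) • X 1) (X 2) ↔
      QCommute (lam * (q ^ 2)⁻¹) (X 2) (X 1) := by
    rw [QCommute.smul_left_iff hc, coeff13, QCommute.inv_iff hc₂]
  have rel43 : QCommute (lam⁻¹ * q) (X 0) (X 2) ↔ QCommute (lam * q⁻¹) (X 2) (X 0) := by
    rw [coeff43, QCommute.inv_iff hc]
  rw [satisfiesRelations_ambRel_iff, satisfiesRelations_multiQMatRel_iff]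
  change QCommute _ (X 0) ((lam * q⁻¹) • X 1) ∧ QCommute _ (X 3) ((lam * q⁻¹) • X 1) ∧
    QCommute _ ((lam * q⁻¹) • X 1) (X 2) ∧ QCommute _ (X 0) (X 2) ∧ QCommute _ (X 3) (X 2) ∧
    X 3 * X 0 = (1 : K) • (X 0 * X 3) + _ • ((lam * q⁻¹) • X 1 * X 2) ↔ _
  rw [rel41, rel21, rel13, rel43, coeff23, one_smul, smul_mul_assoc, smul_smul, coeff24]
  tauto

end ChangeOfGenerators

/-- `R(q⁻¹, λ⁻¹q, λ⁻¹q², 1) ≅ O_{λ,q}(M₂(K))` via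
`x₁ ↦ λq⁻¹·X₁₂`, `x₂ ↦ X₂₂`, `x₃ ↦ X₂₁`, `x₄ ↦ X₁₁`. -/
theorem ambiskew_iso_multiQMat (K : Type*) [Field K] (lam q : Kˣ) :
    ∃ Φ : Ambiskew K ((q : K)⁻¹) ((lam : K)⁻¹ * (q : K)) ((lam : K)⁻¹ * (q : K) ^ 2) 1
        ≃ₐ[K] MultiQMat K (lam : K) (q : K),
      Φ (agen K ((q : K)⁻¹) ((lam : K)⁻¹ * (q : K)) ((lam : K)⁻¹ * (q : K) ^ 2) 1 0) =
        ((lam : K) * (q : K)⁻¹) • mgen K (lam : K) (q : K) 1 ∧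
      Φ (agen K ((q : K)⁻¹) ((lam : K)⁻¹ * (q : K)) ((lam : K)⁻¹ * (q : K) ^ 2) 1 1) =
        mgen K (lam : K) (q : K) 3 ∧
      Φ (agen K ((q : K)⁻¹) ((lam : K)⁻¹ * (q : K)) ((lam : K)⁻¹ * (q : K) ^ 2) 1 2) =
        mgen K (lam : K) (q : K) 2 ∧
      Φ (agen K ((q : K)⁻¹) ((lam : K)⁻¹ * (q : K)) ((lam : K)⁻¹ * (q : K) ^ 2) 1 3) =
        mgen K (lam : K) (q : K) 0 := by
  have hc : (lam : K) * (q : K)⁻¹ ≠ 0 := mul_ne_zero lam.ne_zero (inv_ne_zero q.ne_zero)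
  have hx := (satisfiesRelations_toAmbiskew_iff lam.ne_zero q.ne_zero).mpr
    (satisfiesRelations_presentedGen (MultiQMatRel K lam q))
  have hy : SatisfiesRelations (MultiQMatRel K lam q) (toQMat ((lam : K) * (q : K)⁻¹)
      (presentedGen (AmbRel K (q : K)⁻¹ ((lam : K)⁻¹ * q) ((lam : K)⁻¹ * (q : K) ^ 2) 1))) := by
    rw [← satisfiesRelations_toAmbiskew_iff lam.ne_zero q.ne_zero, toAmbiskew_toQMat hc]
    exact satisfiesRelations_presentedGen _
  have hyx : hy.lift ∘ toAmbiskew ((lam : K) * (q : K)⁻¹) (presentedGen _) = presentedGen _ := by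
    rw [comp_toAmbiskew, hy.lift_comp_presentedGen, toAmbiskew_toQMat hc]
  have hxy : hx.lift ∘ toQMat ((lam : K) * (q : K)⁻¹) (presentedGen _) = presentedGen _ := by
    rw [comp_toQMat, hx.lift_comp_presentedGen, toQMat_toAmbiskew hc]
  have hΦ := presentedAlgEquiv_presentedGen hx hy hyx hxy
  exact ⟨presentedAlgEquiv hx hy hyx hxy, hΦ 0, hΦ 1, hΦ 2, hΦ 3⟩
end
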